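/- Let ε > 0 and let ℒu = J*u − u with J ∈ L¹(ℝ), |x|²J ∈ L¹(ℝ), ∫_ℝ J dx = 1, J even and nonnegative. Let u₋ < u₊ and let u^ε be the bounded classical solution on ℝ×(0,∞) of u_t = ε u_xx + ℒu − u u_x (smooth with all derivatives bounded on ℝ×(t₀,∞) for every t₀ > 0, nondecreasing in x, and satisfying u^ε(·,t) − w(·,t) ∈ L¹(ℝ) for each t > 0 with ‖u^ε(·,t) − w(·,t)‖₁ bounded as t → 0, where w solves the viscous Burgers Riemann problem with states u₋, u₊) with initial datum u₀ satisfying u₀ − u₋ ∈ L¹((−∞,0)), u₀ − u₊ ∈ L¹((0,∞)), u₀′ ∈ L¹(ℝ), u₀′ ≥ 0 a.e. Then for every p ∈ [1,∞] there exists C = C(p) > 0 independent of t and of ε such that ‖u^ε(·,t) − w^R(·,t)‖_{L^p(ℝ)} ≤ C t^{−(1−1/p)/2} [log(2+t)]^{(1+1/p)/2} for all t > 0, where w^R is the rarefaction wave. -/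

import Mathlib

open MeasureTheory Filter
open scoped ENNReal

/-- The heat kernel `G^ε(x,t) = (4πεt)^{-1/2} e^{-x²/(4εt)}`. -/
noncomputable def heatK (ε t y : ℝ) : ℝ :=
  (4 * Real.pi * ε * t) ^ (-(1 : ℝ) / 2) * Real.exp (-(y ^ 2) / (4 * ε * t))

/-- Duhamel integral formulation of `u_t = ε u_xx + J*u - u - u u_x` with initial datum `u₀`. -/
def IsDuhamelSol (ε : ℝ) (J u₀ : ℝ → ℝ) (u : ℝ → ℝ → ℝ) : Prop :=
  ∀ x t, 0 < t →
    u x t = (∫ y, heatK ε t y * u₀ (x - y))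
      + (∫ s in (0 : ℝ)..t, ∫ y, heatK ε (t - s) y *
          ((∫ z, J z * u (x - y - z) s) - u (x - y) s))
      - ∫ s in (0 : ℝ)..t, ∫ y, heatK ε (t - s) y *
          (u (x - y) s * deriv (fun z => u z s) (x - y))

/-- The rarefaction wave with states `um < up` (for `t > 0`). -/
noncomputable def rarefactionWave (um up : ℝ) (x t : ℝ) : ℝ :=
  if x ≤ um * t then um else if up * t ≤ x then up else x / t

/-- The Riemann initial datum with states `um`, `up`. -/
noncomputable def riemannDatum (um up : ℝ) (x : ℝ) : ℝ :=
  if x < 0 then um else up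

/-- A bounded classical solution of the viscous Burgers equation `w_t - w_xx + w w_x = 0`
on `ℝ × (0,∞)` attaining the Riemann datum with states `um`, `up` in `L¹_loc` as `t → 0`
(the smooth approximation of the rarefaction wave). -/
def IsBurgersRiemannSol (um up : ℝ) (w : ℝ → ℝ → ℝ) : Prop :=
  (∃ M, ∀ x t, 0 < t → |w x t| ≤ M) ∧
  (∀ t, 0 < t → ContDiff ℝ 2 fun x => w x t) ∧
  (∀ x t, 0 < t →
    HasDerivAt (fun s => w x s)
      (iteratedDeriv 2 (fun y => w y t) x - w x t * deriv (fun y => w y t) x) t) ∧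
  (∀ R > (0 : ℝ),
    Tendsto (fun t => ∫ x in Set.Icc (-R) R, |w x t - riemannDatum um up x|)
      (nhdsWithin 0 (Set.Ioi 0)) (nhds 0))

/-!
The slope obeys Oleinik's bound `u_x ≤ 1 / t`: this is the maximum principle for the equation
satisfied by `u_x`, the nonlocal operator being nonpositive at a maximum. Since the slope of the
rarefaction wave on its fan is exactly `1 / T`, at time `T` the two profiles cross only once, at
some `c T` with `c` between the states, and their `L¹` distance is the excess mass on the left of
the ray `x = c t` plus the missing mass on its right. Both are fed by the flux through this ray,
which is at most `(ε + ∫ z² J / 2) / t` because its convective part has a sign; hence the `L¹`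
distance grows at most like `log T`.

The constant is uniform in `ε` because `ε` is bounded: solutions which stay close to the Riemann
datum in `L¹` carry masses bounded in terms of the states, while the diffusive flux changes these
masses at a rate proportional to `ε`. Finally, the solution and the rarefaction wave are
nondecreasing with slope at most `1 / t`, so their difference is `1 / t`-Lipschitz, its `L¹` bound
controls its supremum, and interpolation gives every `p`.
-/

section PartialDerivatives

/-- The partial derivative `∂u/∂x` of a function of space and time. -/
noncomputable def spaceDeriv (u : ℝ → ℝ → ℝ) (x t : ℝ) : ℝ :=
  fderiv ℝ (Function.uncurry u) (x, t) (1, 0)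

/-- The partial derivative `∂u/∂t` of a function of space and time. -/
noncomputable def timeDeriv (u : ℝ → ℝ → ℝ) (x t : ℝ) : ℝ :=
  fderiv ℝ (Function.uncurry u) (x, t) (0, 1)

variable {u : ℝ → ℝ → ℝ} {x t : ℝ}

lemma hasDerivAt_space (h : DifferentiableAt ℝ (Function.uncurry u) (x, t)) :
    HasDerivAt (fun y => u y t) (spaceDeriv u x t) x :=
  HasFDerivAt.comp_hasDerivAt (f := fun y => (y, t)) x h.hasFDerivAt
    ((hasDerivAt_id x).prodMk (hasDerivAt_const x t))

lemma hasDerivAt_ray {y c : ℝ} (h : DifferentiableAt ℝ (Function.uncurry u) (y + c * t, t)) :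
    HasDerivAt (fun s => u (y + c * s) s)
      (timeDeriv u (y + c * t) t + c * spaceDeriv u (y + c * t) t) t := by
  have hray : HasDerivAt (fun s => (y + c * s, s)) ((0, 1) + c • ((1, 0) : ℝ × ℝ)) t := by
    simpa using (((hasDerivAt_id t).const_mul c).const_add y).prodMk (hasDerivAt_id t)
  refine (HasFDerivAt.comp_hasDerivAt (f := fun s => (y + c * s, s)) t
    h.hasFDerivAt hray).congr_deriv ?_
  rw [map_add, map_smul, smul_eq_mul, timeDeriv, spaceDeriv]

lemma hasDerivAt_time (h : DifferentiableAt ℝ (Function.uncurry u) (x, t)) :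
    HasDerivAt (fun s => u x s) (timeDeriv u x t) t :=
  HasFDerivAt.comp_hasDerivAt (f := fun s => (x, s)) t h.hasFDerivAt
    ((hasDerivAt_const t x).prodMk (hasDerivAt_id t))

lemma contDiffAt_spaceDeriv {m n : WithTop ℕ∞}
    (h : ContDiffAt ℝ n (Function.uncurry u) (x, t)) (hmn : m + 1 ≤ n) :
    ContDiffAt ℝ m (Function.uncurry (spaceDeriv u)) (x, t) :=
  (h.fderiv_right hmn).clm_apply contDiffAt_const

lemma contDiffAt_timeDeriv {m n : WithTop ℕ∞}
    (h : ContDiffAt ℝ n (Function.uncurry u) (x, t)) (hmn : m + 1 ≤ n) :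
    ContDiffAt ℝ m (Function.uncurry (timeDeriv u)) (x, t) :=
  (h.fderiv_right hmn).clm_apply contDiffAt_const

lemma fderiv_fderiv_apply_const {E F : Type*} [NormedAddCommGroup E] [NormedSpace ℝ E]
    [NormedAddCommGroup F] [NormedSpace ℝ F] {f : E → F} {p : E} (h : ContDiffAt ℝ 2 f p)
    (v w : E) : fderiv ℝ (fun q => fderiv ℝ f q v) p w = fderiv ℝ (fderiv ℝ f) p w v := by
  have hd : DifferentiableAt ℝ (fderiv ℝ f) p :=
    (h.fderiv_right (m := 1) (by norm_num)).differentiableAt one_ne_zero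
  simp [fderiv_clm_apply hd (differentiableAt_const v)]

lemma timeDeriv_spaceDeriv (h : ContDiffAt ℝ 2 (Function.uncurry u) (x, t)) :
    timeDeriv (spaceDeriv u) x t = spaceDeriv (timeDeriv u) x t :=
  calc timeDeriv (spaceDeriv u) x t
      = fderiv ℝ (fderiv ℝ (Function.uncurry u)) (x, t) (0, 1) (1, 0) :=
        fderiv_fderiv_apply_const h _ _
    _ = fderiv ℝ (fderiv ℝ (Function.uncurry u)) (x, t) (1, 0) (0, 1) :=
        (h.isSymmSndFDerivAt (by simp)).eq _ _
    _ = spaceDeriv (timeDeriv u) x t := (fderiv_fderiv_apply_const h _ _).symm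

lemma abs_spaceDeriv_le :
    |spaceDeriv u x t| ≤ ‖iteratedFDeriv ℝ 1 (Function.uncurry u) (x, t)‖ := by
  rw [norm_iteratedFDeriv_one]
  simpa [spaceDeriv] using (fderiv ℝ (Function.uncurry u) (x, t)).le_opNorm (1, 0)

lemma abs_timeDeriv_le :
    |timeDeriv u x t| ≤ ‖iteratedFDeriv ℝ 1 (Function.uncurry u) (x, t)‖ := by
  rw [norm_iteratedFDeriv_one]
  simpa [timeDeriv] using (fderiv ℝ (Function.uncurry u) (x, t)).le_opNorm (0, 1)

lemma abs_spaceDeriv_spaceDeriv_le (h : ContDiffAt ℝ 2 (Function.uncurry u) (x, t)) :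
    |spaceDeriv (spaceDeriv u) x t| ≤ ‖iteratedFDeriv ℝ 2 (Function.uncurry u) (x, t)‖ := by
  have heq : spaceDeriv (spaceDeriv u) x t =
      iteratedFDeriv ℝ 2 (Function.uncurry u) (x, t) ![(1, 0), (1, 0)] :=
    (fderiv_fderiv_apply_const h _ _).trans (by simp [iteratedFDeriv_two_apply])
  simpa [heq, Fin.prod_univ_two] using
    (iteratedFDeriv ℝ 2 (Function.uncurry u) (x, t)).le_opNorm ![(1, 0), (1, 0)]

end PartialDerivatives

section Extrema

lemma second_deriv_nonpos_of_isLocalMax {f f' : ℝ → ℝ} {a f'' : ℝ}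
    (hf : ∀ x, HasDerivAt f (f' x) x) (hf' : HasDerivAt f' f'' a) (hmax : IsLocalMax f a) :
    f'' ≤ 0 := by
  have hderiv : deriv f = f' := funext fun x => (hf x).deriv
  by_contra! hpos
  have hmin : IsLocalMin f a :=
    isLocalMin_of_deriv_deriv_pos (by rwa [hderiv, hf'.deriv]) hmax.deriv_eq_zero
      (hf a).continuousAt
  have hconst : f =ᶠ[nhds a] fun _ => f a := by
    filter_upwards [hmax, hmin] with x hle hge using le_antisymm hle hge
  have hzero := hconst.deriv.deriv.eq_of_nhds
  rw [hderiv, hf'.deriv] at hzero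
  simp only [deriv_const', deriv_const] at hzero
  exact hpos.ne' hzero

lemma deriv_nonneg_of_isMaxOn_Icc {f : ℝ → ℝ} {f' a b : ℝ} (hab : a < b)
    (hf : HasDerivAt f f' b) (hmax : IsMaxOn f (Set.Icc a b) b) : 0 ≤ f' := by
  have hcone : a - b ∈ posTangentConeAt (Set.Icc a b) b :=
    sub_mem_posTangentConeAt_of_segment_subset
      ((convex_Icc a b).segment_subset (Set.right_mem_Icc.2 hab.le) (Set.left_mem_Icc.2 hab.le))
  have hnonpos := hmax.localize.hasFDerivWithinAt_nonpos
    hf.hasFDerivAt.hasFDerivWithinAt hcone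
  simp only [ContinuousLinearMap.toSpanSingleton_apply, smul_eq_mul] at hnonpos
  nlinarith

end Extrema

section InteractionKernel

/-- The interaction kernels `J` of the nonlocal operator `J * u - u`: even probability densities on
the line with finite second moment. -/
structure IsInteractionKernel (J : ℝ → ℝ) : Prop where
  integrable : Integrable J
  integrable_sq_mul : Integrable fun x => x ^ 2 * J x
  integral_eq_one : ∫ x, J x = 1
  even : ∀ x, J (-x) = J x
  nonneg : ∀ x, 0 ≤ J x

/-- The second moment `∫ z² J(z) dz` of an interaction kernel. -/
noncomputable def secondMoment (J : ℝ → ℝ) : ℝ := ∫ z, z ^ 2 * J z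

/-- The flux of the nonlocal operator, that is, the primitive in `x` of `J * f - f`. -/
noncomputable def nonlocalFlux (J f : ℝ → ℝ) (x : ℝ) : ℝ := ∫ z, J z * ∫ y in x..x - z, f y

variable {J f : ℝ → ℝ} {K L : ℝ}

lemma integrable_mul_comp_sub (hJ : Integrable J) (hf : Continuous f) (hK : ∀ x, |f x| ≤ K)
    (x : ℝ) : Integrable fun z => J z * f (x - z) :=
  hJ.mul_bdd (c := K) (hf.comp (continuous_const.sub continuous_id)).aestronglyMeasurable
    (Eventually.of_forall fun _ => hK _)

lemma hasDerivAt_integral_mul_comp_sub (hJ : Integrable J) {f' : ℝ → ℝ} {K' : ℝ}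
    (hf : ∀ x, HasDerivAt f (f' x) x) (hf' : Continuous f') (hK : ∀ x, |f x| ≤ K)
    (hK' : ∀ x, |f' x| ≤ K') (x : ℝ) :
    HasDerivAt (fun y => ∫ z, J z * f (y - z)) (∫ z, J z * f' (x - z)) x := by
  have hfc : Continuous f := continuous_iff_continuousAt.2 fun x => (hf x).continuousAt
  refine (hasDerivAt_integral_of_dominated_loc_of_deriv_le (s := Set.univ)
    (F := fun y z => J z * f (y - z)) (F' := fun y z => J z * f' (y - z))
    (bound := fun z => |J z| * K') univ_mem
    (Eventually.of_forall fun y => (integrable_mul_comp_sub hJ hfc hK y).1)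
    (integrable_mul_comp_sub hJ hfc hK x) (integrable_mul_comp_sub hJ hf' hK' x).1
    (Eventually.of_forall fun z y _ => ?_) (hJ.abs.mul_const K')
    (Eventually.of_forall fun z y _ => ((hf (y - z)).comp_sub_const y z).const_mul (J z))).2
  rw [norm_mul]
  exact mul_le_mul_of_nonneg_left (hK' _) (abs_nonneg _)

lemma hasDerivAt_integral_sub (hf : Continuous f) (x z : ℝ) :
    HasDerivAt (fun y => ∫ s in y..y - z, f s) (f (x - z) - f x) x := by
  have hsub : ∀ y, ∫ s in y..y - z, f s = (∫ s in (0 : ℝ)..y - z, f s) - ∫ s in (0 : ℝ)..y, f s :=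
    fun y => (intervalIntegral.integral_interval_sub_left (hf.intervalIntegrable _ _)
      (hf.intervalIntegrable _ _)).symm
  simp only [hsub]
  exact ((hf.integral_hasStrictDerivAt 0 (x - z)).hasDerivAt.comp_sub_const x z).sub
    (hf.integral_hasStrictDerivAt 0 x).hasDerivAt

lemma mul_le_integral_of_monotone (hf : Monotone f) (x h : ℝ) :
    h * f x ≤ ∫ y in x..x + h, f y := by
  have hconst : ∫ _ in x..x + h, f x = h * f x := by simp
  rw [← hconst]
  rcases le_total 0 h with hh | hh
  · exact intervalIntegral.integral_mono_on (by linarith) intervalIntegrable_const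
      hf.intervalIntegrable fun y hy => hf hy.1
  · rw [intervalIntegral.integral_symm, intervalIntegral.integral_symm (x + h) x, neg_le_neg_iff]
    exact intervalIntegral.integral_mono_on (by linarith) hf.intervalIntegrable
      intervalIntegrable_const fun y hy => hf hy.2

lemma integral_le_of_monotone_mul_sub (hf : Continuous f) (hL : Monotone fun x => L * x - f x)
    (x h : ℝ) : ∫ y in x..x + h, f y ≤ h * f x + L * h ^ 2 / 2 := by
  have hle := mul_le_integral_of_monotone hL x h
  have hlin : ∫ y in x..x + h, L * y = L * (x * h) + L * h ^ 2 / 2 := by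
    rw [intervalIntegral.integral_const_mul, integral_id]
    ring
  rw [intervalIntegral.integral_sub (Continuous.intervalIntegrable (by fun_prop) _ _)
    (hf.intervalIntegrable _ _), hlin] at hle
  linarith

namespace IsInteractionKernel

variable (hJ : IsInteractionKernel J)
include hJ

lemma secondMoment_nonneg : 0 ≤ secondMoment J :=
  integral_nonneg fun z => mul_nonneg (sq_nonneg z) (hJ.nonneg z)

lemma integrable_mul_id : Integrable fun z => J z * z := by
  refine (hJ.integrable.add hJ.integrable_sq_mul).mono'
    (hJ.integrable.1.mul continuous_id.aestronglyMeasurable) (Eventually.of_forall fun z => ?_)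
  rw [norm_mul, Real.norm_of_nonneg (hJ.nonneg z), Real.norm_eq_abs, Pi.add_apply]
  nlinarith [hJ.nonneg z, mul_nonneg (hJ.nonneg z) (sq_nonneg (|z| - 1)), sq_abs z]

lemma integral_mul_id : ∫ z, J z * z = 0 := by
  have hneg := integral_neg_eq_self (fun z => J z * z) volume
  simp only [hJ.even, mul_neg, integral_neg] at hneg
  linarith

lemma integrable_nonlocalFlux (hf : Continuous f) (hK : ∀ x, |f x| ≤ K) (x : ℝ) :
    Integrable fun z => J z * ∫ y in x..x - z, f y := by
  have hcont : Continuous fun z => ∫ y in x..x - z, f y :=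
    (intervalIntegral.continuous_primitive (fun _ _ => hf.intervalIntegrable _ _) x).comp
      (continuous_const.sub continuous_id)
  refine (hJ.integrable_mul_id.norm.mul_const K).mono' (hJ.integrable.1.mul
    hcont.aestronglyMeasurable) (Eventually.of_forall fun z => ?_)
  have hint := intervalIntegral.norm_integral_le_of_norm_le_const (f := f) (a := x) (b := x - z)
    fun y _ => hK y
  rw [sub_sub_cancel_left, abs_neg] at hint
  rw [norm_mul, norm_mul, mul_assoc, mul_comm ‖z‖]
  exact mul_le_mul_of_nonneg_left hint (norm_nonneg _)

lemma hasDerivAt_nonlocalFlux (hf : Continuous f) (hK : ∀ x, |f x| ≤ K) (x : ℝ) :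
    HasDerivAt (nonlocalFlux J f) ((∫ z, J z * f (x - z)) - f x) x := by
  have hmeas : AEStronglyMeasurable (fun z => J z * (f (x - z) - f x)) :=
    hJ.integrable.1.mul (by fun_prop : Continuous _).aestronglyMeasurable
  have hderiv := (hasDerivAt_integral_of_dominated_loc_of_deriv_le (s := Set.univ) (x₀ := x)
    (F := fun y z => J z * ∫ s in y..y - z, f s) (F' := fun y z => J z * (f (y - z) - f y))
    (bound := fun z => J z * (K + K)) univ_mem
    (Eventually.of_forall fun y => (hJ.integrable_nonlocalFlux hf hK y).1)
    (hJ.integrable_nonlocalFlux hf hK x) hmeas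
    (Eventually.of_forall fun z y _ => ?_) (hJ.integrable.mul_const _)
    (Eventually.of_forall fun z y _ => (hasDerivAt_integral_sub hf y z).const_mul (J z))).2
  · refine hderiv.congr_deriv ?_
    simp only [mul_sub]
    rw [integral_sub (integrable_mul_comp_sub hJ.integrable hf hK x)
      (hJ.integrable.mul_const _), integral_mul_const, hJ.integral_eq_one, one_mul]
  · rw [norm_mul, Real.norm_of_nonneg (hJ.nonneg z)]
    exact mul_le_mul_of_nonneg_left ((norm_sub_le _ _).trans (add_le_add (hK _) (hK _)))
      (hJ.nonneg z)

lemma nonlocalFlux_nonneg (hf : Continuous f) (hK : ∀ x, |f x| ≤ K) (hmono : Monotone f) (x : ℝ) :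
    0 ≤ nonlocalFlux J f x :=
  calc 0 = ∫ z, J z * z * -f x := by rw [integral_mul_const, hJ.integral_mul_id, zero_mul]
    _ ≤ nonlocalFlux J f x := by
      refine integral_mono (hJ.integrable_mul_id.mul_const _)
        (hJ.integrable_nonlocalFlux hf hK x) fun z => ?_
      have hle := mul_le_mul_of_nonneg_left (mul_le_integral_of_monotone hmono x (-z)) (hJ.nonneg z)
      rw [← sub_eq_add_neg] at hle
      linarith

lemma two_mul_nonlocalFlux_le (hf : Continuous f) (hK : ∀ x, |f x| ≤ K)
    (hL : Monotone fun x => L * x - f x) (x : ℝ) :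
    2 * nonlocalFlux J f x ≤ L * secondMoment J := by
  have hbound : nonlocalFlux J f x ≤ ∫ z, (J z * z * -f x + z ^ 2 * J z * (L / 2)) := by
    refine integral_mono (hJ.integrable_nonlocalFlux hf hK x)
      ((hJ.integrable_mul_id.mul_const _).add (hJ.integrable_sq_mul.mul_const _)) fun z => ?_
    have hle := mul_le_mul_of_nonneg_left (integral_le_of_monotone_mul_sub hf hL x (-z))
      (hJ.nonneg z)
    rw [← sub_eq_add_neg] at hle
    linarith
  rw [integral_add (hJ.integrable_mul_id.mul_const _) (hJ.integrable_sq_mul.mul_const _),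
    integral_mul_const, integral_mul_const, hJ.integral_mul_id, ← secondMoment] at hbound
  linarith

end IsInteractionKernel

end InteractionKernel

section MonotoneSolution

/-- Bounded classical solutions of `u_t = ε u_xx + J * u - u - u u_x` on `ℝ × (0, ∞)` which are
nondecreasing in space and have all their derivatives bounded away from `t = 0`. -/
structure IsMonotoneSolution (ε : ℝ) (J : ℝ → ℝ) (u : ℝ → ℝ → ℝ) : Prop where
  eps_pos : 0 < ε
  kernel : IsInteractionKernel J
  bounded : ∃ K, ∀ x t, 0 < t → |u x t| ≤ K
  contDiffAt : ∀ x t, 0 < t → ContDiffAt ℝ (⊤ : ℕ∞) (Function.uncurry u) (x, t)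
  bounded_iteratedFDeriv : ∀ t₀ > (0 : ℝ), ∀ n : ℕ, ∃ K, ∀ x t, t₀ < t →
    ‖iteratedFDeriv ℝ n (Function.uncurry u) (x, t)‖ ≤ K
  hasDerivAt : ∀ x t, 0 < t → HasDerivAt (fun s => u x s)
    (ε * iteratedDeriv 2 (fun y => u y t) x + ((∫ z, J z * u (x - z) t) - u x t)
      - u x t * deriv (fun y => u y t) x) t
  monotone : ∀ t > (0 : ℝ), Monotone fun x => u x t

namespace IsMonotoneSolution

variable {ε : ℝ} {J : ℝ → ℝ} {u : ℝ → ℝ → ℝ} (hu : IsMonotoneSolution ε J u) (x : ℝ) {t : ℝ}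
  (ht : 0 < t)
include hu ht

lemma contDiffAt_spaceDeriv :
    ContDiffAt ℝ (⊤ : ℕ∞) (Function.uncurry (spaceDeriv u)) (x, t) :=
  _root_.contDiffAt_spaceDeriv (hu.contDiffAt x t ht) le_rfl

lemma contDiffAt_timeDeriv :
    ContDiffAt ℝ (⊤ : ℕ∞) (Function.uncurry (timeDeriv u)) (x, t) :=
  _root_.contDiffAt_timeDeriv (hu.contDiffAt x t ht) le_rfl

lemma contDiffAt_spaceDeriv_spaceDeriv :
    ContDiffAt ℝ (⊤ : ℕ∞) (Function.uncurry (spaceDeriv (spaceDeriv u))) (x, t) :=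
  _root_.contDiffAt_spaceDeriv (hu.contDiffAt_spaceDeriv x ht) le_rfl

lemma differentiableAt : DifferentiableAt ℝ (Function.uncurry u) (x, t) :=
  (hu.contDiffAt x t ht).differentiableAt (by simp)

lemma hasDerivAt_space : HasDerivAt (fun y => u y t) (spaceDeriv u x t) x :=
  _root_.hasDerivAt_space (hu.differentiableAt x ht)

lemma hasDerivAt_spaceDeriv :
    HasDerivAt (fun y => spaceDeriv u y t) (spaceDeriv (spaceDeriv u) x t) x :=
  _root_.hasDerivAt_space ((hu.contDiffAt_spaceDeriv x ht).differentiableAt (by simp))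

lemma continuous : Continuous fun y => u y t :=
  continuous_iff_continuousAt.2 fun x => (hu.hasDerivAt_space x ht).continuousAt

lemma continuous_spaceDeriv : Continuous fun y => spaceDeriv u y t :=
  continuous_iff_continuousAt.2 fun x => (hu.hasDerivAt_spaceDeriv x ht).continuousAt

lemma spaceDeriv_nonneg : 0 ≤ spaceDeriv u x t := by
  rw [← (hu.hasDerivAt_space x ht).deriv]
  exact (hu.monotone t ht).deriv_nonneg

omit ht in
lemma exists_abs_deriv_le {t₀ : ℝ} (ht₀ : 0 < t₀) :
    ∃ K, 0 ≤ K ∧ ∀ x t, t₀ < t → |spaceDeriv u x t| ≤ K ∧ |timeDeriv u x t| ≤ K ∧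
      |spaceDeriv (spaceDeriv u) x t| ≤ K := by
  obtain ⟨K₁, hK₁⟩ := hu.bounded_iteratedFDeriv t₀ ht₀ 1
  obtain ⟨K₂, hK₂⟩ := hu.bounded_iteratedFDeriv t₀ ht₀ 2
  refine ⟨max (max K₁ K₂) 0, le_max_right _ _, fun x t ht => ⟨?_, ?_, ?_⟩⟩
  · exact (abs_spaceDeriv_le.trans (hK₁ x t ht)).trans (by simp)
  · exact (abs_timeDeriv_le.trans (hK₁ x t ht)).trans (by simp)
  · have hC2 := (hu.contDiffAt x t (ht₀.trans ht)).of_le (m := 2)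
      (WithTop.coe_le_coe.2 le_top)
    exact ((abs_spaceDeriv_spaceDeriv_le hC2).trans (hK₂ x t ht)).trans (by simp)

lemma timeDeriv_eq :
    timeDeriv u x t = ε * spaceDeriv (spaceDeriv u) x t
      + ((∫ z, J z * u (x - z) t) - u x t) - u x t * spaceDeriv u x t := by
  have hderiv : deriv (fun y => u y t) = fun y => spaceDeriv u y t :=
    funext fun y => (hu.hasDerivAt_space y ht).deriv
  rw [(hasDerivAt_time (hu.differentiableAt x ht)).unique (hu.hasDerivAt x t ht),
    iteratedDeriv_succ, iteratedDeriv_one, hderiv, (hu.hasDerivAt_spaceDeriv x ht).deriv]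

lemma integrable_mul_spaceDeriv : Integrable fun z => J z * spaceDeriv u (x - z) t := by
  obtain ⟨K, -, hK⟩ := hu.exists_abs_deriv_le (half_pos ht)
  exact integrable_mul_comp_sub hu.kernel.integrable (hu.continuous_spaceDeriv ht)
    (fun y => (hK y t (half_lt_self ht)).1) x

lemma timeDeriv_spaceDeriv_eq :
    timeDeriv (spaceDeriv u) x t = ε * spaceDeriv (spaceDeriv (spaceDeriv u)) x t
      + ((∫ z, J z * spaceDeriv u (x - z) t) - spaceDeriv u x t)
      - (spaceDeriv u x t * spaceDeriv u x t + u x t * spaceDeriv (spaceDeriv u) x t) := by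
  obtain ⟨K, hK⟩ := hu.bounded
  obtain ⟨K', -, hK'⟩ := hu.exists_abs_deriv_le (half_pos ht)
  have hxxx := _root_.hasDerivAt_space
    ((hu.contDiffAt_spaceDeriv_spaceDeriv x ht).differentiableAt (by simp))
  have hconv := hasDerivAt_integral_mul_comp_sub hu.kernel.integrable
    (fun y => hu.hasDerivAt_space y ht) (hu.continuous_spaceDeriv ht) (fun y => hK y t ht)
    (fun y => (hK' y t (half_lt_self ht)).1) x
  have hrhs := ((hxxx.const_mul ε).add (hconv.sub (hu.hasDerivAt_space x ht))).sub
    ((hu.hasDerivAt_space x ht).mul (hu.hasDerivAt_spaceDeriv x ht))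
  have hlhs := _root_.hasDerivAt_space
    ((hu.contDiffAt_timeDeriv x ht).differentiableAt (by simp))
  rw [timeDeriv_spaceDeriv ((hu.contDiffAt x t ht).of_le (WithTop.coe_le_coe.2 le_top))]
  exact hlhs.unique (hrhs.congr_of_eventuallyEq
    (Eventually.of_forall fun y => hu.timeDeriv_eq y ht))

lemma spaceDeriv_le_slope_add {s K : ℝ} (hs : 0 < s)
    (hK : ∀ y, |spaceDeriv (spaceDeriv u) y t| ≤ K) :
    spaceDeriv u x t ≤ (u (x + s) t - u x t) / s + K * s := by
  obtain ⟨c, hc, hslope⟩ := exists_hasDerivAt_eq_slope (fun y => u y t) (fun y => spaceDeriv u y t)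
    (lt_add_of_pos_right x hs) (hu.continuous ht).continuousOn fun y _ => hu.hasDerivAt_space y ht
  rw [add_sub_cancel_left] at hslope
  have hlip : |spaceDeriv u x t - spaceDeriv u c t| ≤ K * |x - c| :=
    Convex.norm_image_sub_le_of_norm_hasDerivWithin_le (s := Set.univ)
      (fun y _ => (hu.hasDerivAt_spaceDeriv y ht).hasDerivWithinAt) (fun y _ => hK y)
      convex_univ trivial trivial
  have hxc : |x - c| ≤ s := by rw [abs_le]; constructor <;> linarith [hc.1, hc.2]
  have hKs := mul_le_mul_of_nonneg_left hxc ((abs_nonneg _).trans (hK 0))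
  linarith [le_abs_self (spaceDeriv u x t - spaceDeriv u c t)]

end IsMonotoneSolution

end MonotoneSolution

section Oleinik

/-- Monotone solutions connecting the states `um` at `-∞` and `up` at `+∞`. -/
structure IsMonotoneFront (ε : ℝ) (J : ℝ → ℝ) (um up : ℝ) (u : ℝ → ℝ → ℝ) : Prop
    extends IsMonotoneSolution ε J u where
  tendsto_atBot : ∀ t > (0 : ℝ), Tendsto (fun x => u x t) atBot (nhds um)
  tendsto_atTop : ∀ t > (0 : ℝ), Tendsto (fun x => u x t) atTop (nhds up)

lemma exists_isMaxOn_univ_prod {X Y : Type*} [TopologicalSpace X] [TopologicalSpace Y]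
    {f : X × Y → ℝ} {s : Set Y} (hs : IsCompact s) (hf : ContinuousOn f (Set.univ ×ˢ s))
    {x₀ : X} {y₀ : Y} (hy₀ : y₀ ∈ s)
    (hle : ∀ᶠ x in cocompact X, ∀ y ∈ s, f (x, y) ≤ f (x₀, y₀)) :
    ∃ p ∈ Set.univ ×ˢ s, IsMaxOn f (Set.univ ×ˢ s) p := by
  obtain ⟨k, hk, hkle⟩ := mem_cocompact.1 hle
  have h₀ : (x₀, y₀) ∈ insert x₀ k ×ˢ s := ⟨Set.mem_insert _ _, hy₀⟩
  obtain ⟨p, hp, hmax⟩ := ((hk.insert x₀).prod hs).exists_isMaxOn ⟨_, h₀⟩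
    (hf.mono (Set.prod_mono_left (Set.subset_univ _)))
  refine ⟨p, ⟨trivial, hp.2⟩, fun q hq => ?_⟩
  by_cases hqk : q.1 ∈ k
  · exact hmax ⟨Set.mem_insert_of_mem _ hqk, hq.2⟩
  · exact (hkle hqk q.2 hq.2).trans (hmax h₀)

lemma IsMonotoneSolution.sub_mul_spaceDeriv_le_one_of_isMaxOn {ε : ℝ} {J : ℝ → ℝ} {u : ℝ → ℝ → ℝ}
    (hu : IsMonotoneSolution ε J u) {a T y t : ℝ} (ha : 0 < a) (ht : t ∈ Set.Ioc a T)
    (hmax : IsMaxOn (fun p : ℝ × ℝ => (p.2 - a) * spaceDeriv u p.1 p.2)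
      (Set.univ ×ˢ Set.Icc a T) (y, t)) :
    (t - a) * spaceDeriv u y t ≤ 1 := by
  have ht₀ : 0 < t := ha.trans ht.1
  have hta : 0 < t - a := sub_pos.2 ht.1
  have hspace : ∀ x, spaceDeriv u x t ≤ spaceDeriv u y t := fun x =>
    le_of_mul_le_mul_left (hmax (show (x, t) ∈ _ from ⟨trivial, ht.1.le, ht.2⟩)) hta
  have hlocal : IsLocalMax (fun x => spaceDeriv u x t) y := Eventually.of_forall hspace
  have hxx : spaceDeriv (spaceDeriv u) y t = 0 :=
    hlocal.hasDerivAt_eq_zero (hu.hasDerivAt_spaceDeriv y ht₀)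
  have hxxx : spaceDeriv (spaceDeriv (spaceDeriv u)) y t ≤ 0 :=
    second_deriv_nonpos_of_isLocalMax (fun x => hu.hasDerivAt_spaceDeriv x ht₀)
      (_root_.hasDerivAt_space
        ((hu.contDiffAt_spaceDeriv_spaceDeriv y ht₀).differentiableAt (by simp)))
      hlocal
  have hconv : ∫ z, J z * spaceDeriv u (y - z) t ≤ spaceDeriv u y t :=
    calc ∫ z, J z * spaceDeriv u (y - z) t
        ≤ ∫ z, J z * spaceDeriv u y t :=
          integral_mono (hu.integrable_mul_spaceDeriv y ht₀) (hu.kernel.integrable.mul_const _)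
            fun z => mul_le_mul_of_nonneg_left (hspace _) (hu.kernel.nonneg z)
      _ = spaceDeriv u y t := by
          rw [integral_mul_const, hu.kernel.integral_eq_one, one_mul]
  have htime : 0 ≤ 1 * spaceDeriv u y t + (t - a) * timeDeriv (spaceDeriv u) y t :=
    deriv_nonneg_of_isMaxOn_Icc ht.1
      (((hasDerivAt_id t).sub_const a).mul
        (hasDerivAt_time ((hu.contDiffAt_spaceDeriv y ht₀).differentiableAt (by simp))))
      fun s hs => hmax (show (y, s) ∈ _ from ⟨trivial, hs.1, hs.2.trans ht.2⟩)
  have hriccati : timeDeriv (spaceDeriv u) y t ≤ -(spaceDeriv u y t * spaceDeriv u y t) := by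
    rw [hu.timeDeriv_spaceDeriv_eq y ht₀, hxx]
    linarith [mul_nonpos_of_nonneg_of_nonpos hu.eps_pos.le hxxx]
  by_contra! hgt
  have hpos : 0 < spaceDeriv u y t := (mul_pos_iff_of_pos_left hta).1 (one_pos.trans hgt)
  nlinarith [mul_le_mul_of_nonneg_left hriccati hta.le, mul_pos hpos (sub_pos.2 hgt)]

namespace IsMonotoneFront

variable {ε : ℝ} {J : ℝ → ℝ} {um up : ℝ} {u : ℝ → ℝ → ℝ} (hu : IsMonotoneFront ε J um up u)
include hu

lemma ge (x : ℝ) {t : ℝ} (ht : 0 < t) : um ≤ u x t :=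
  (hu.monotone t ht).le_of_tendsto (hu.tendsto_atBot t ht) x

lemma le (x : ℝ) {t : ℝ} (ht : 0 < t) : u x t ≤ up :=
  (hu.monotone t ht).ge_of_tendsto (hu.tendsto_atTop t ht) x

lemma tendstoUniformlyOn_atTop {a b : ℝ} (ha : 0 < a) :
    TendstoUniformlyOn u (fun _ => up) atTop (Set.Icc a b) :=
  Monotone.tendstoUniformlyOn_of_forall_tendsto isCompact_Icc
    (fun x t ht => (hu.hasDerivAt x t (ha.trans_le ht.1)).continuousAt.continuousWithinAt)
    (fun t ht => hu.monotone t (ha.trans_le ht.1)) continuousOn_const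
    fun t ht => hu.tendsto_atTop t (ha.trans_le ht.1)

lemma tendstoUniformlyOn_atBot {a b : ℝ} (ha : 0 < a) :
    TendstoUniformlyOn u (fun _ => um) atBot (Set.Icc a b) := by
  have hneg : TendstoUniformlyOn (fun x => u (-x)) (fun _ => um) atTop (Set.Icc a b) :=
    Antitone.tendstoUniformlyOn_of_forall_tendsto isCompact_Icc
      (fun x t ht => (hu.hasDerivAt (-x) t (ha.trans_le ht.1)).continuousAt.continuousWithinAt)
      (fun t ht _ _ hxy => hu.monotone t (ha.trans_le ht.1) (neg_le_neg hxy)) continuousOn_const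
      fun t ht => (hu.tendsto_atBot t (ha.trans_le ht.1)).comp tendsto_neg_atTop_atBot
  intro V hV
  filter_upwards [tendsto_neg_atBot_atTop.eventually (hneg V hV)] with x hx
  simpa only [neg_neg] using hx

lemma eventually_lt_atTop {a b δ : ℝ} (ha : 0 < a) (hδ : 0 < δ) :
    ∀ᶠ x in atTop, ∀ t ∈ Set.Icc a b, up - δ < u x t := by
  filter_upwards [Metric.tendstoUniformlyOn_iff.1 (hu.tendstoUniformlyOn_atTop ha) δ hδ]
    with x hx t ht
  have hdist := hx t ht
  rw [Real.dist_eq, abs_lt] at hdist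
  linarith

lemma eventually_lt_atBot {a b δ : ℝ} (ha : 0 < a) (hδ : 0 < δ) :
    ∀ᶠ x in atBot, ∀ t ∈ Set.Icc a b, u x t < um + δ := by
  filter_upwards [Metric.tendstoUniformlyOn_iff.1 (hu.tendstoUniformlyOn_atBot ha) δ hδ]
    with x hx t ht
  have hdist := hx t ht
  rw [Real.dist_eq, abs_lt] at hdist
  linarith

lemma eventually_add_sub_lt {a b δ : ℝ} (ha : 0 < a) (hδ : 0 < δ) (s : ℝ) :
    ∀ᶠ x in cocompact ℝ, ∀ t ∈ Set.Icc a b, u (x + s) t - u x t < δ := by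
  rw [cocompact_eq_atBot_atTop, eventually_sup]
  have hshift : Tendsto (fun x : ℝ => x + s) atBot atBot :=
    tendsto_atBot_add_const_right _ s tendsto_id
  constructor
  · filter_upwards [hshift.eventually (hu.eventually_lt_atBot (b := b) ha hδ)] with x hx t ht
    linarith [hx t ht, hu.ge x (ha.trans_le ht.1)]
  · filter_upwards [hu.eventually_lt_atTop (b := b) ha hδ] with x hx t ht
    linarith [hx t ht, hu.le (x + s) (ha.trans_le ht.1)]

lemma eventually_spaceDeriv_le {a b η : ℝ} (ha : 0 < a) (hη : 0 < η) :
    ∀ᶠ x in cocompact ℝ, ∀ t ∈ Set.Icc a b, spaceDeriv u x t ≤ η := by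
  obtain ⟨K, hK₀, hK⟩ := hu.exists_abs_deriv_le (half_pos ha)
  set s := η / (2 * (K + 1)) with hs
  have hs₀ : 0 < s := by positivity
  have hKs : K * s ≤ η / 2 := by
    rw [hs, mul_div_assoc', div_le_div_iff₀ (by positivity) (by positivity)]
    nlinarith
  filter_upwards [hu.eventually_add_sub_lt (b := b) ha (by positivity : 0 < η / 2 * s) s]
    with x hx t ht
  have hslope := hu.spaceDeriv_le_slope_add x (ha.trans_le ht.1) hs₀
    fun y => (hK y t ((half_lt_self ha).trans_le ht.1)).2.2
  linarith [(div_le_iff₀ hs₀).2 (hx t ht).le]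

lemma sub_mul_spaceDeriv_le_one {a T : ℝ} (ha : 0 < a) (haT : a < T) (x : ℝ) :
    (T - a) * spaceDeriv u x T ≤ 1 := by
  have hTa : 0 < T - a := sub_pos.2 haT
  have hcont : ContinuousOn (fun p : ℝ × ℝ => (p.2 - a) * spaceDeriv u p.1 p.2)
      (Set.univ ×ˢ Set.Icc a T) := fun p hp =>
    (ContinuousAt.mul (by fun_prop) (hu.contDiffAt_spaceDeriv p.1
      (ha.trans_le hp.2.1)).continuousAt).continuousWithinAt
  by_contra! hgt
  obtain ⟨⟨y, t⟩, ⟨-, ht⟩, hmax⟩ := exists_isMaxOn_univ_prod isCompact_Icc hcont (x₀ := x)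
    (Set.right_mem_Icc.2 haT.le) (by
      filter_upwards [hu.eventually_spaceDeriv_le (b := T) ha (one_div_pos.2 hTa)] with y hy s hs
      calc (s - a) * spaceDeriv u y s ≤ (T - a) * (1 / (T - a)) :=
            mul_le_mul (by linarith [hs.2]) (hy s hs)
              (hu.spaceDeriv_nonneg y (ha.trans_le hs.1)) hTa.le
        _ = 1 := mul_one_div_cancel hTa.ne'
        _ ≤ (T - a) * spaceDeriv u x T := hgt.le)
  have hgt' : 1 < (t - a) * spaceDeriv u y t :=
    hgt.trans_le (hmax (show (x, T) ∈ _ from ⟨trivial, haT.le, le_rfl⟩))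
  have hat : t ≠ a := by
    rintro rfl
    norm_num at hgt'
  exact hgt'.not_ge (hu.sub_mul_spaceDeriv_le_one_of_isMaxOn ha ⟨ht.1.lt_of_ne' hat, ht.2⟩ hmax)

lemma spaceDeriv_le_one_div (x : ℝ) {t : ℝ} (ht : 0 < t) : spaceDeriv u x t ≤ 1 / t := by
  rw [le_div_iff₀' ht]
  have hlim : Tendsto (fun a => (t - a) * spaceDeriv u x t) (nhdsWithin 0 (Set.Ioi 0))
      (nhds (t * spaceDeriv u x t)) := by
    refine (Continuous.tendsto' ?_ 0 _ (by simp)).mono_left nhdsWithin_le_nhds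
    fun_prop
  refine le_of_tendsto hlim ?_
  filter_upwards [Ioo_mem_nhdsGT ht] with a ha using hu.sub_mul_spaceDeriv_le_one ha.1 ha.2 x

lemma monotone_one_div_mul_sub {t : ℝ} (ht : 0 < t) : Monotone fun x => 1 / t * x - u x t :=
  monotone_of_hasDerivAt_nonneg (fun x =>
    ((hasDerivAt_id x).const_mul (1 / t)).sub (hu.hasDerivAt_space x ht)) fun x => by
      simpa using hu.spaceDeriv_le_one_div x ht

end IsMonotoneFront

end Oleinik

section Lebesgue

lemma lintegral_enorm_le_of_eventually_intervalIntegral_le {f : ℝ → ℝ} {C : ℝ}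
    (hf : LocallyIntegrable f) (h : ∀ᶠ R in atTop, ∫ x in -R..R, |f x| ≤ C) :
    ∫⁻ x, ‖f x‖ₑ ≤ ENNReal.ofReal C := by
  have hcover : AECover volume atTop fun R : ℝ => Set.Ioc (-R) R :=
    aecover_Ioc tendsto_neg_atTop_atBot tendsto_id
  refine le_of_tendsto (hcover.lintegral_tendsto_of_countably_generated
    hf.aestronglyMeasurable.enorm) ?_
  filter_upwards [h, eventually_ge_atTop 0] with R hR hR₀
  rw [intervalIntegral.integral_of_le (by linarith)] at hR
  rw [← ofReal_integral_norm_eq_lintegral_enorm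
    ((hf.integrableOn_isCompact isCompact_Icc).mono_set Set.Ioc_subset_Icc_self)]
  exact ENNReal.ofReal_le_ofReal hR

lemma intervalIntegral_abs_le_of_lintegral_enorm_le {f : ℝ → ℝ} {C a b : ℝ} (hC : 0 ≤ C)
    (hab : a ≤ b) (hf : IntervalIntegrable f volume a b)
    (h : ∫⁻ x, ‖f x‖ₑ ≤ ENNReal.ofReal C) : ∫ x in a..b, |f x| ≤ C := by
  rw [intervalIntegrable_iff_integrableOn_Ioc_of_le hab] at hf
  rw [intervalIntegral.integral_of_le hab, ← ENNReal.ofReal_le_ofReal_iff hC]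
  calc ENNReal.ofReal (∫ x in Set.Ioc a b, ‖f x‖) = ∫⁻ x in Set.Ioc a b, ‖f x‖ₑ :=
        ofReal_integral_norm_eq_lintegral_enorm hf
    _ ≤ ENNReal.ofReal C := (setLIntegral_le_lintegral _ _).trans h

lemma lintegral_enorm_sub_le {α : Type*} [MeasurableSpace α] {μ : Measure α} {f g h : α → ℝ}
    (hgh : AEStronglyMeasurable (fun x => g x - h x) μ) :
    ∫⁻ x, ‖f x - h x‖ₑ ∂μ ≤ (∫⁻ x, ‖f x - g x‖ₑ ∂μ) + ∫⁻ x, ‖g x - h x‖ₑ ∂μ := by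
  rw [← lintegral_add_right' _ hgh.enorm]
  refine lintegral_mono fun x => ?_
  simpa only [sub_add_sub_cancel] using enorm_add_le (f x - g x) (g x - h x)

lemma mul_sub_le_of_lintegral_enorm_le {g : ℝ → ℝ} {a b c B : ℝ} (hab : a ≤ b) (hB : 0 ≤ B)
    (hc : ∀ x ∈ Set.Ioo a b, c ≤ |g x|) (hg : ∫⁻ x, ‖g x‖ₑ ≤ ENNReal.ofReal B) :
    c * (b - a) ≤ B := by
  rw [← ENNReal.ofReal_le_ofReal_iff hB]
  calc ENNReal.ofReal (c * (b - a)) = ∫⁻ _ in Set.Ioo a b, ENNReal.ofReal c := by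
        rw [setLIntegral_const, Real.volume_Ioo, ENNReal.ofReal_mul' (sub_nonneg.2 hab)]
    _ ≤ ∫⁻ x in Set.Ioo a b, ‖g x‖ₑ := setLIntegral_mono' measurableSet_Ioo fun x hx => by
        rw [← ofReal_norm]
        exact ENNReal.ofReal_le_ofReal (hc x hx)
    _ ≤ ENNReal.ofReal B := (setLIntegral_le_lintegral _ _).trans hg

variable {f : ℝ → ℝ} {m M : ℝ}

lemma lintegral_enorm_translate_sub_le_of_nonneg (hf : Monotone f) (hm : ∀ x, m ≤ f x)
    (hM : ∀ x, f x ≤ M) {y : ℝ} (hy : 0 ≤ y) :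
    ∫⁻ x, ‖f (x - y) - f x‖ₑ ≤ ENNReal.ofReal ((M - m) * y) := by
  have hshift : Monotone fun x => f (x - y) := fun _ _ h => hf (sub_le_sub_right h y)
  have hint : ∀ a b, IntervalIntegrable f volume a b := fun _ _ => hf.intervalIntegrable
  refine lintegral_enorm_le_of_eventually_intervalIntegral_le
    (hshift.locallyIntegrable.sub hf.locallyIntegrable) (Eventually.of_forall fun R => ?_)
  calc ∫ x in -R..R, |f (x - y) - f x|
      ≤ ∫ x in -R..R, (f x - f (x - y)) := by
        refine le_of_eq (intervalIntegral.integral_congr fun x _ => ?_)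
        rw [abs_sub_comm]
        exact abs_of_nonneg (sub_nonneg.2 (hf (sub_le_self x hy)))
    _ = (∫ x in R - y..R, f x) - ∫ x in -R - y..-R, f x := by
        rw [intervalIntegral.integral_sub hf.intervalIntegrable hshift.intervalIntegrable,
          intervalIntegral.integral_comp_sub_right f,
          intervalIntegral.integral_interval_sub_interval_comm' (hint _ _) (hint _ _) (hint _ _)]
    _ ≤ (∫ _ in R - y..R, M) - ∫ _ in -R - y..-R, m :=
        sub_le_sub
          (intervalIntegral.integral_mono_on (by linarith) (hint _ _) intervalIntegrable_const
            fun x _ => hM x)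
          (intervalIntegral.integral_mono_on (by linarith) intervalIntegrable_const (hint _ _)
            fun x _ => hm x)
    _ = (M - m) * y := by
        simp only [intervalIntegral.integral_const, smul_eq_mul]
        ring

lemma lintegral_enorm_translate_sub_le (hf : Monotone f) (hm : ∀ x, m ≤ f x)
    (hM : ∀ x, f x ≤ M) (y : ℝ) :
    ∫⁻ x, ‖f (x - y) - f x‖ₑ ≤ ENNReal.ofReal ((M - m) * |y|) := by
  rcases le_total 0 y with hy | hy
  · rw [abs_of_nonneg hy]
    exact lintegral_enorm_translate_sub_le_of_nonneg hf hm hM hy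
  · rw [abs_of_nonpos hy]
    calc ∫⁻ x, ‖f (x - y) - f x‖ₑ = ∫⁻ x, ‖f (x - -y) - f x‖ₑ := by
          rw [← lintegral_sub_right_eq_self (fun x => ‖f (x - -y) - f x‖ₑ) y]
          refine lintegral_congr fun x => ?_
          rw [sub_neg_eq_add, sub_add_cancel, ← enorm_neg, neg_sub]
      _ ≤ ENNReal.ofReal ((M - m) * -y) :=
          lintegral_enorm_translate_sub_le_of_nonneg hf hm hM (neg_nonneg.2 hy)

end Lebesgue

section Riemann

variable {um up : ℝ} (h : um ≤ up)
include h

lemma rarefactionWave_eq_max_min (x : ℝ) {t : ℝ} (ht : 0 < t) :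
    rarefactionWave um up x t = max um (min up (x / t)) := by
  unfold rarefactionWave
  split_ifs with hl hr
  · rw [← div_le_iff₀ ht] at hl
    rw [min_eq_right (hl.trans h), max_eq_left hl]
  · rw [← le_div_iff₀ ht] at hr
    rw [min_eq_left hr, max_eq_right h]
  · rw [not_le, ← lt_div_iff₀ ht] at hl
    rw [not_le, ← div_lt_iff₀ ht] at hr
    rw [min_eq_right hr.le, max_eq_right hl.le]

lemma continuous_rarefactionWave {t : ℝ} (ht : 0 < t) :
    Continuous fun x => rarefactionWave um up x t := by
  simp only [rarefactionWave_eq_max_min h _ ht]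
  fun_prop

lemma rarefactionWave_neg (x : ℝ) {t : ℝ} (ht : 0 < t) :
    rarefactionWave um up (-x) t = -rarefactionWave (-up) (-um) x t := by
  rw [rarefactionWave_eq_max_min h _ ht, rarefactionWave_eq_max_min (neg_le_neg h) _ ht, neg_div,
    ← neg_neg (x / t), min_neg_neg, max_neg_neg, neg_neg, neg_neg, max_min_distrib_left,
    max_eq_right h]

lemma monotone_riemannDatum : Monotone (riemannDatum um up) := by
  intro x y hxy
  unfold riemannDatum
  split_ifs <;> linarith

lemma riemannDatum_ge (x : ℝ) : um ≤ riemannDatum um up x := by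
  unfold riemannDatum
  split_ifs <;> linarith

lemma riemannDatum_le (x : ℝ) : riemannDatum um up x ≤ up := by
  unfold riemannDatum
  split_ifs <;> linarith

lemma le_rarefactionWave (x : ℝ) {t : ℝ} (ht : 0 < t) : um ≤ rarefactionWave um up x t := by
  rw [rarefactionWave_eq_max_min h x ht]
  exact le_max_left _ _

lemma rarefactionWave_le (x : ℝ) {t : ℝ} (ht : 0 < t) : rarefactionWave um up x t ≤ up := by
  rw [rarefactionWave_eq_max_min h x ht]
  exact max_le h (min_le_left _ _)

lemma monotone_rarefactionWave {t : ℝ} (ht : 0 < t) :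
    Monotone fun x => rarefactionWave um up x t := by
  simp only [rarefactionWave_eq_max_min h _ ht]
  exact fun x y hxy => max_le_max_left _ (min_le_min_left _ (div_le_div_of_nonneg_right hxy ht.le))

lemma monotone_one_div_mul_sub_rarefactionWave {t : ℝ} (ht : 0 < t) :
    Monotone fun x => 1 / t * x - rarefactionWave um up x t := by
  simp only [rarefactionWave_eq_max_min h _ ht, one_div_mul_eq_div]
  intro x y hxy
  have hdiv : x / t ≤ y / t := div_le_div_of_nonneg_right hxy ht.le
  simp only
  grind

lemma lintegral_enorm_riemannDatum_sub_rarefactionWave_le {t : ℝ} (ht : 0 < t) :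
    ∫⁻ x, ‖riemannDatum um up x - rarefactionWave um up x t‖ₑ
      ≤ ENNReal.ofReal (2 * ((up - um) * (max |um| |up| * t))) := by
  set r := max |um| |up| * t with hr
  have hum : -r ≤ um * t := by
    rw [hr, ← neg_mul]
    exact mul_le_mul_of_nonneg_right ((neg_le_neg (le_max_left _ _)).trans (neg_abs_le um)) ht.le
  have hup : up * t ≤ r :=
    mul_le_mul_of_nonneg_right ((le_abs_self up).trans (le_max_right _ _)) ht.le
  have hr₀ : 0 ≤ r := mul_nonneg ((abs_nonneg _).trans (le_max_left _ _)) ht.le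
  have hbound : ∀ x, ‖riemannDatum um up x - rarefactionWave um up x t‖ₑ ≤
      (Set.Icc (-r) r).indicator (fun _ => ENNReal.ofReal (up - um)) x := fun x => by
    by_cases hx : x ∈ Set.Icc (-r) r
    · rw [Set.indicator_of_mem hx, ← ofReal_norm, Real.norm_eq_abs]
      refine ENNReal.ofReal_le_ofReal (abs_sub_le_of_le_of_le ?_ ?_ ?_ ?_)
      exacts [riemannDatum_ge h x, riemannDatum_le h x, le_rarefactionWave h x ht,
        rarefactionWave_le h x ht]
    · suffices heq : riemannDatum um up x = rarefactionWave um up x t by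
        rw [heq, sub_self, enorm_zero]
        exact zero_le
      rw [Set.mem_Icc, not_and_or, not_le, not_le] at hx
      rcases hx with hx | hx
      · rw [riemannDatum, if_pos (by linarith), rarefactionWave, if_pos (by linarith)]
      · have humup : um * t ≤ up * t := mul_le_mul_of_nonneg_right h ht.le
        rw [riemannDatum, if_neg (by linarith), rarefactionWave, if_neg (by linarith),
          if_pos (by linarith)]
  calc _ ≤ ∫⁻ x, (Set.Icc (-r) r).indicator (fun _ => ENNReal.ofReal (up - um)) x :=
        lintegral_mono hbound
    _ = _ := by
        rw [lintegral_indicator measurableSet_Icc, setLIntegral_const, Real.volume_Icc,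
          ← ENNReal.ofReal_mul (sub_nonneg.2 h)]
        ring_nf

end Riemann

section RiemannLimits

variable {f : ℝ → ℝ} {um up B : ℝ} (hf : Monotone f) (hB : 0 ≤ B)
  (h : ∫⁻ x, ‖f x - riemannDatum um up x‖ₑ ≤ ENNReal.ofReal B)
include hf hB h

lemma sub_mul_le_of_lintegral_enorm_sub_riemannDatum_le {R : ℝ} (hR : 0 ≤ R) :
    (up - f R) * R ≤ B := by
  have hle := mul_sub_le_of_lintegral_enorm_le (c := up - f R) hR hB (fun x hx => by
    rw [riemannDatum, if_neg hx.1.not_gt, abs_sub_comm]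
    exact (sub_le_sub_left (hf hx.2.le) _).trans (le_abs_self _)) h
  rwa [sub_zero] at hle

lemma neg_sub_mul_le_of_lintegral_enorm_sub_riemannDatum_le {R : ℝ} (hR : 0 ≤ R) :
    (f (-R) - um) * R ≤ B := by
  have hle := mul_sub_le_of_lintegral_enorm_le (c := f (-R) - um) (neg_nonpos.2 hR) hB
    (fun x hx => by
      rw [riemannDatum, if_pos hx.2]
      exact (sub_le_sub_right (hf hx.1.le) _).trans (le_abs_self _)) h
  rwa [zero_sub, neg_neg] at hle

lemma le_of_lintegral_enorm_sub_riemannDatum_le (x : ℝ) : f x ≤ up := by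
  by_contra! hlt
  have hc : 0 < f x - up := sub_pos.2 hlt
  have hle := mul_sub_le_of_lintegral_enorm_le (a := max x 0) (b := max x 0 + (B + 1) / (f x - up))
    (c := f x - up) (le_add_of_nonneg_right (by positivity)) hB (fun y hy => by
      rw [riemannDatum, if_neg ((le_max_right _ _).trans hy.1.le).not_gt]
      exact (sub_le_sub_right (hf ((le_max_left _ _).trans hy.1.le)) _).trans (le_abs_self _)) h
  rw [add_sub_cancel_left, mul_div_cancel₀ _ hc.ne'] at hle
  linarith

lemma ge_of_lintegral_enorm_sub_riemannDatum_le (x : ℝ) : um ≤ f x := by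
  by_contra! hlt
  have hc : 0 < um - f x := sub_pos.2 hlt
  have hle := mul_sub_le_of_lintegral_enorm_le (a := min x 0 - (B + 1) / (um - f x)) (b := min x 0)
    (c := um - f x) (sub_le_self _ (by positivity)) hB (fun y hy => by
      rw [riemannDatum, if_pos (hy.2.trans_le (min_le_right _ _)), abs_sub_comm]
      exact (sub_le_sub_left (hf (hy.2.le.trans (min_le_left _ _))) _).trans (le_abs_self _)) h
  rw [sub_sub_cancel, mul_div_cancel₀ _ hc.ne'] at hle
  linarith

lemma tendsto_atTop_of_lintegral_enorm_sub_riemannDatum_le : Tendsto f atTop (nhds up) := by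
  have hlower : Tendsto (fun R => up - B / R) atTop (nhds up) := by
    simpa only [sub_zero, id] using (tendsto_const_nhds.div_atTop tendsto_id).const_sub up
  refine tendsto_of_tendsto_of_tendsto_of_le_of_le' hlower tendsto_const_nhds ?_
    (Eventually.of_forall (le_of_lintegral_enorm_sub_riemannDatum_le hf hB h))
  filter_upwards [eventually_gt_atTop 0] with R hR
  rw [sub_le_comm, le_div_iff₀ hR]
  exact sub_mul_le_of_lintegral_enorm_sub_riemannDatum_le hf hB h hR.le

lemma tendsto_atBot_of_lintegral_enorm_sub_riemannDatum_le : Tendsto f atBot (nhds um) := by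
  have hupper : Tendsto (fun R => um + B / R) atTop (nhds um) := by
    simpa only [add_zero, id] using (tendsto_const_nhds.div_atTop tendsto_id).const_add um
  have hneg : Tendsto (fun R => f (-R)) atTop (nhds um) := by
    refine tendsto_of_tendsto_of_tendsto_of_le_of_le' tendsto_const_nhds hupper
      (Eventually.of_forall fun R => ge_of_lintegral_enorm_sub_riemannDatum_le hf hB h (-R)) ?_
    filter_upwards [eventually_gt_atTop 0] with R hR
    rw [← sub_le_iff_le_add', le_div_iff₀ hR]
    exact neg_sub_mul_le_of_lintegral_enorm_sub_riemannDatum_le hf hB h hR.le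
  simpa only [Function.comp_def, neg_neg] using hneg.comp tendsto_neg_atBot_atTop

end RiemannLimits

section SignedMass

/-- The mass of `f` on `[-R, 0]` minus its mass on `[0, R]`. A function lying above `g` on the left
of `0` and below `g` on its right is at `L¹`-distance `signedMass f R - signedMass g R` from `g`
on `[-R, R]`. -/
noncomputable def signedMass (f : ℝ → ℝ) (R : ℝ) : ℝ :=
  (∫ y in -R..0, f y) - ∫ y in (0 : ℝ)..R, f y

lemma intervalIntegrable_of_locallyIntegrable {f : ℝ → ℝ} (hf : LocallyIntegrable f) (a b : ℝ) :
    IntervalIntegrable f volume a b :=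
  (hf.integrableOn_isCompact isCompact_uIcc).intervalIntegrable

variable {f g : ℝ → ℝ} {R : ℝ}

lemma signedMass_sub (hf : LocallyIntegrable f) (hg : LocallyIntegrable g) :
    signedMass f R - signedMass g R = signedMass (fun y => f y - g y) R := by
  have hfi := fun a b => intervalIntegrable_of_locallyIntegrable hf a b
  have hgi := fun a b => intervalIntegrable_of_locallyIntegrable hg a b
  simp only [signedMass, intervalIntegral.integral_sub (hfi _ _) (hgi _ _)]
  ring

lemma signedMass_le_integral_abs (hf : LocallyIntegrable f) (hR : 0 ≤ R) :
    signedMass f R ≤ ∫ y in -R..R, |f y| := by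
  have hfi := fun a b => intervalIntegrable_of_locallyIntegrable hf a b
  rw [← intervalIntegral.integral_add_adjacent_intervals (b := 0) (hfi _ _).abs (hfi _ _).abs,
    signedMass, sub_eq_add_neg]
  exact add_le_add
    ((le_abs_self _).trans (intervalIntegral.abs_integral_le_integral_abs (by linarith)))
    ((neg_le_abs _).trans (intervalIntegral.abs_integral_le_integral_abs hR))

lemma integral_abs_eq_signedMass (hf : LocallyIntegrable f) (hR : 0 ≤ R)
    (hneg : ∀ y ≤ 0, 0 ≤ f y) (hpos : ∀ y ≥ 0, f y ≤ 0) :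
    ∫ y in -R..R, |f y| = signedMass f R := by
  have hfi := fun a b => intervalIntegrable_of_locallyIntegrable hf a b
  rw [← intervalIntegral.integral_add_adjacent_intervals (b := 0) (hfi _ _).abs (hfi _ _).abs,
    signedMass, sub_eq_add_neg, ← intervalIntegral.integral_neg]
  congr 1 <;> refine intervalIntegral.integral_congr fun y hy => ?_
  · rw [Set.uIcc_of_le (by linarith)] at hy
    exact abs_of_nonneg (hneg y hy.2)
  · rw [Set.uIcc_of_le hR] at hy
    exact abs_of_nonpos (hpos y hy.1)

variable {um up : ℝ}

lemma signedMass_riemannDatum (hR : 0 ≤ R) :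
    signedMass (riemannDatum um up) R = -(R * (up - um)) := by
  have hleft : ∫ y in -R..0, riemannDatum um up y = ∫ _ in -R..0, um :=
    intervalIntegral.integral_congr_Ioo_of_le (by linarith) fun y hy => if_pos hy.2
  have hright : ∫ y in (0 : ℝ)..R, riemannDatum um up y = ∫ _ in (0 : ℝ)..R, up :=
    intervalIntegral.integral_congr_Ioo_of_le hR fun y hy => if_neg hy.1.not_gt
  rw [signedMass, hleft, hright]
  simp only [intervalIntegral.integral_const, smul_eq_mul]
  ring

lemma integral_rarefactionWave_le (h : um ≤ up) {c T : ℝ} (hc : c ∈ Set.Icc um up) (hT : 0 < T)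
    (hR : T * (up - c) ≤ R) :
    ∫ y in (0 : ℝ)..R, rarefactionWave um up (y + c * T) T ≤ R * up - T * (up - c) ^ 2 / 2 := by
  set d := T * (up - c) with hd
  have hd₀ : 0 ≤ d := mul_nonneg hT.le (sub_nonneg.2 hc.2)
  have hi : ∀ a b, IntervalIntegrable (fun y => rarefactionWave um up (y + c * T) T) volume a b :=
    ((continuous_rarefactionWave h hT).comp (continuous_add_const (c * T))).intervalIntegrable
  have hfan : ∀ y ∈ Set.Icc 0 d, rarefactionWave um up (y + c * T) T ≤ c + T⁻¹ * y := fun y hy => by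
    rw [rarefactionWave_eq_max_min h _ hT, add_div, mul_div_cancel_right₀ _ hT.ne', add_comm,
      div_eq_inv_mul]
    have hy₀ : 0 ≤ T⁻¹ * y := mul_nonneg (inv_nonneg.2 hT.le) hy.1
    exact max_le (by linarith [hc.1]) (min_le_right _ _)
  have hplateau : ∀ y ∈ Set.Icc d R, rarefactionWave um up (y + c * T) T ≤ up := fun y _ => by
    rw [rarefactionWave_eq_max_min h _ hT]
    exact max_le h (min_le_left _ _)
  have hlin : ∀ a b, IntervalIntegrable (fun y : ℝ => T⁻¹ * y) volume a b := fun a b =>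
    (continuous_const_mul T⁻¹).intervalIntegrable a b
  rw [← intervalIntegral.integral_add_adjacent_intervals (b := d) (hi _ _) (hi _ _)]
  calc _ ≤ (∫ y in (0 : ℝ)..d, (c + T⁻¹ * y)) + ∫ _ in d..R, up :=
        add_le_add
          (intervalIntegral.integral_mono_on hd₀ (hi _ _)
            (intervalIntegrable_const.add (hlin _ _)) hfan)
          (intervalIntegral.integral_mono_on hR (hi _ _) intervalIntegrable_const hplateau)
    _ = R * up - T * (up - c) ^ 2 / 2 := by
        rw [intervalIntegral.integral_add intervalIntegrable_const (hlin _ _),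
          intervalIntegral.integral_const_mul, integral_id]
        simp only [intervalIntegral.integral_const, smul_eq_mul, hd]
        field_simp
        ring

lemma signedMass_rarefactionWave_ge (h : um ≤ up) {c T : ℝ} (hc : c ∈ Set.Icc um up) (hT : 0 < T)
    (hR : T * (up - um) ≤ R) :
    T * ((c - um) ^ 2 + (up - c) ^ 2) / 2 - R * (up - um)
      ≤ signedMass (fun y => rarefactionWave um up (y + c * T) T) R := by
  have hright := integral_rarefactionWave_le h hc hT
    ((mul_le_mul_of_nonneg_left (by linarith [hc.1]) hT.le).trans hR)
  have hleft := integral_rarefactionWave_le (neg_le_neg h) (c := -c) (R := R)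
    ⟨neg_le_neg hc.2, neg_le_neg hc.1⟩ hT
    ((mul_le_mul_of_nonneg_left (by linarith [hc.2]) hT.le).trans hR)
  have hreflect : ∫ y in -R..0, rarefactionWave um up (y + c * T) T
      = -∫ y in (0 : ℝ)..R, rarefactionWave (-up) (-um) (y + -c * T) T := by
    rw [← intervalIntegral.integral_neg, ← neg_zero,
      ← intervalIntegral.integral_comp_neg, neg_zero]
    refine intervalIntegral.integral_congr fun y _ => ?_
    rw [← rarefactionWave_neg h _ hT]
    congr 1
    ring
  rw [signedMass, hreflect]
  nlinarith

end SignedMass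

section MassBalance

lemma sub_le_mul_log_add_mul_sub {f f' : ℝ → ℝ} {t₁ T A D : ℝ} (ht₁ : 0 < t₁) (hT : t₁ ≤ T)
    (hf : ∀ t ∈ Set.Icc t₁ T, HasDerivAt f (f' t) t)
    (hf' : ∀ t ∈ Set.Icc t₁ T, f' t ≤ A / t + D) :
    f T - f t₁ ≤ A * Real.log (T / t₁) + D * (T - t₁) := by
  have hderiv : ∀ t ∈ Set.Icc t₁ T, HasDerivAt (fun t => f t - (A * Real.log t + D * t))
      (f' t - (A * t⁻¹ + D * 1)) t := fun t ht =>
    (hf t ht).sub (((Real.hasDerivAt_log (ht₁.trans_le ht.1).ne').const_mul A).add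
      ((hasDerivAt_id t).const_mul D))
  have hanti : AntitoneOn (fun t => f t - (A * Real.log t + D * t)) (Set.Icc t₁ T) :=
    antitoneOn_of_hasDerivWithinAt_nonpos (convex_Icc t₁ T)
      (fun t ht => (hderiv t ht).continuousAt.continuousWithinAt)
      (fun t ht => (hderiv t (interior_subset ht)).hasDerivWithinAt) fun t ht => by
        have := hf' t (interior_subset ht)
        rw [div_eq_mul_inv] at this
        linarith
  have := hanti (Set.left_mem_Icc.2 hT) (Set.right_mem_Icc.2 hT) hT
  rw [Real.log_div (ht₁.trans_le hT).ne' ht₁.ne']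
  linarith

/-- The flux of `u` through a point moving with velocity `c`, normalized by the constant `c² / 2`
so that the convective part is `-(u - c)² / 2`. -/
noncomputable def totalFlux (ε : ℝ) (J : ℝ → ℝ) (u : ℝ → ℝ → ℝ) (c x t : ℝ) : ℝ :=
  ε * spaceDeriv u x t + nonlocalFlux J (fun y => u y t) x - (u x t - c) ^ 2 / 2

namespace IsMonotoneSolution

variable {ε : ℝ} {J : ℝ → ℝ} {u : ℝ → ℝ → ℝ} (hu : IsMonotoneSolution ε J u) {t : ℝ} (ht : 0 < t)
include hu ht

lemma hasDerivAt_totalFlux (c x : ℝ) :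
    HasDerivAt (fun y => totalFlux ε J u c y t) (timeDeriv u x t + c * spaceDeriv u x t) x := by
  obtain ⟨K, hK⟩ := hu.bounded
  have hflux := (((hu.hasDerivAt_spaceDeriv x ht).const_mul ε).add
    (hu.kernel.hasDerivAt_nonlocalFlux (hu.continuous ht) (fun y => hK y t ht) x)).sub
    ((((hu.hasDerivAt_space x ht).sub_const c).pow 2).div_const 2)
  refine hflux.congr_deriv ?_
  rw [hu.timeDeriv_eq x ht]
  push_cast
  ring

lemma hasDerivAt_integral_ray (c a b : ℝ) :
    HasDerivAt (fun s => ∫ y in a..b, u (y + c * s) s)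
      (totalFlux ε J u c (b + c * t) t - totalFlux ε J u c (a + c * t) t) t := by
  obtain ⟨K, -, hK⟩ := hu.exists_abs_deriv_le (half_pos ht)
  have hcont : Continuous fun y => timeDeriv u (y + c * t) t + c * spaceDeriv u (y + c * t) t :=
    continuous_iff_continuousAt.2 fun y =>
      ((hu.contDiffAt_timeDeriv (y + c * t) ht).continuousAt.add
        ((hu.contDiffAt_spaceDeriv (y + c * t) ht).continuousAt.const_mul c)).comp
          (f := fun y : ℝ => ((y + c * t, t) : ℝ × ℝ)) (by fun_prop)
  have hslice : ∀ s > 0, Continuous fun y => u (y + c * s) s := fun s hs =>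
    (hu.continuous hs).comp (continuous_add_const _)
  have hderiv := (intervalIntegral.hasDerivAt_integral_of_dominated_loc_of_deriv_le
    (μ := volume) (a := a) (b := b) (x₀ := t) (F := fun s y => u (y + c * s) s)
    (F' := fun s y => timeDeriv u (y + c * s) s + c * spaceDeriv u (y + c * s) s)
    (bound := fun _ => K + |c| * K) (Ioi_mem_nhds (half_lt_self ht))
    ((lt_mem_nhds ht).mono fun s hs => (hslice s hs).aestronglyMeasurable)
    ((hslice t ht).intervalIntegrable _ _) hcont.aestronglyMeasurable
    (Eventually.of_forall fun y _ s hs => by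
      obtain ⟨hx, ht', -⟩ := hK (y + c * s) s hs
      refine (norm_add_le _ _).trans (add_le_add ht' ?_)
      rw [norm_mul]
      exact mul_le_mul_of_nonneg_left hx (norm_nonneg _))
    intervalIntegrable_const
    (Eventually.of_forall fun y _ s hs =>
      hasDerivAt_ray (hu.differentiableAt _ ((half_pos ht).trans hs)))).2
  refine hderiv.congr_deriv (intervalIntegral.integral_eq_sub_of_hasDerivAt
    (f := fun y => totalFlux ε J u c (y + c * t) t) (fun y _ => ?_)
    (hcont.intervalIntegrable _ _))
  exact (hu.hasDerivAt_totalFlux ht c (y + c * t)).comp_add_const y (c * t)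

lemma neg_totalFlux_le (c x : ℝ) : -totalFlux ε J u c x t ≤ (u x t - c) ^ 2 / 2 := by
  obtain ⟨K, hK⟩ := hu.bounded
  have hlocal := mul_nonneg hu.eps_pos.le (hu.spaceDeriv_nonneg x ht)
  have hnonlocal := hu.kernel.nonlocalFlux_nonneg (hu.continuous ht) (fun y => hK y t ht)
    (hu.monotone t ht) x
  unfold totalFlux
  linarith

lemma hasDerivAt_signedMass (c R : ℝ) :
    HasDerivAt (fun s => signedMass (fun y => u (y + c * s) s) R)
      (2 * totalFlux ε J u c (c * t) t - totalFlux ε J u c (-R + c * t) t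
        - totalFlux ε J u c (R + c * t) t) t := by
  refine ((hu.hasDerivAt_integral_ray ht c (-R) 0).sub
    (hu.hasDerivAt_integral_ray ht c 0 R)).congr_deriv ?_
  rw [zero_add]
  ring

end IsMonotoneSolution

namespace IsMonotoneFront

variable {ε : ℝ} {J : ℝ → ℝ} {um up : ℝ} {u : ℝ → ℝ → ℝ} (hu : IsMonotoneFront ε J um up u)
include hu

lemma two_mul_totalFlux_le (c x : ℝ) {t : ℝ} (ht : 0 < t) :
    2 * totalFlux ε J u c x t ≤ (2 * ε + secondMoment J) / t := by
  obtain ⟨K, hK⟩ := hu.bounded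
  have hlocal := mul_le_mul_of_nonneg_left (hu.spaceDeriv_le_one_div x ht) hu.eps_pos.le
  have hnonlocal := hu.kernel.two_mul_nonlocalFlux_le (hu.continuous ht) (fun y => hK y t ht)
    (hu.monotone_one_div_mul_sub ht) x
  rw [add_div, div_eq_mul_one_div (2 * ε), div_eq_mul_one_div (secondMoment J)]
  unfold totalFlux
  linarith [sq_nonneg (u x t - c)]

lemma signedMass_sub_le {t₁ T c R D : ℝ} (ht₁ : 0 < t₁) (hT : t₁ ≤ T)
    (hD : ∀ t ∈ Set.Icc t₁ T, (u (-R + c * t) t - c) ^ 2 / 2 + (u (R + c * t) t - c) ^ 2 / 2 ≤ D) :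
    signedMass (fun y => u (y + c * T) T) R - signedMass (fun y => u (y + c * t₁) t₁) R
      ≤ (2 * ε + secondMoment J) * Real.log (T / t₁) + D * (T - t₁) := by
  refine sub_le_mul_log_add_mul_sub (f := fun s => signedMass (fun y => u (y + c * s) s) R) ht₁ hT
    (fun t ht => hu.hasDerivAt_signedMass (ht₁.trans_le ht.1) c R) fun t ht => ?_
  have ht₀ := ht₁.trans_le ht.1
  linarith [hu.two_mul_totalFlux_le c (c * t) ht₀, hu.neg_totalFlux_le ht₀ c (-R + c * t),
    hu.neg_totalFlux_le ht₀ c (R + c * t), hD t ht]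

end IsMonotoneFront

end MassBalance

section LongTime

lemma signedMass_translate_le {um up B R : ℝ} {f : ℝ → ℝ} (h : um ≤ up) (hf : Continuous f)
    (hB : 0 ≤ B) (hfB : ∫⁻ x, ‖f x - riemannDatum um up x‖ₑ ≤ ENNReal.ofReal B) (a : ℝ)
    (hR : 0 ≤ R) :
    signedMass (fun y => f (y + a)) R ≤ B + (up - um) * |a| - R * (up - um) := by
  have hmono := monotone_riemannDatum h
  have hfa : LocallyIntegrable fun y => f (y + a) :=
    (hf.comp (continuous_add_const a)).locallyIntegrable
  have hmeas : Measurable fun y => ‖riemannDatum um up (y - -a) - riemannDatum um up y‖ₑ :=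
    ((hmono.measurable.comp (measurable_sub_const _)).sub hmono.measurable).enorm
  have hdist : ∫⁻ y, ‖f (y + a) - riemannDatum um up y‖ₑ
      ≤ ENNReal.ofReal (B + (up - um) * |a|) :=
    calc ∫⁻ y, ‖f (y + a) - riemannDatum um up y‖ₑ
        ≤ ∫⁻ y, (‖f (y + a) - riemannDatum um up (y + a)‖ₑ
            + ‖riemannDatum um up (y - -a) - riemannDatum um up y‖ₑ) :=
          lintegral_mono fun y => by
            rw [sub_neg_eq_add, ← sub_add_sub_cancel _ (riemannDatum um up (y + a))]
            exact enorm_add_le _ _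
      _ = (∫⁻ y, ‖f y - riemannDatum um up y‖ₑ)
            + ∫⁻ y, ‖riemannDatum um up (y - -a) - riemannDatum um up y‖ₑ := by
          rw [lintegral_add_right _ hmeas,
            lintegral_add_right_eq_self (fun y => ‖f y - riemannDatum um up y‖ₑ)]
      _ ≤ ENNReal.ofReal (B + (up - um) * |a|) := by
          rw [ENNReal.ofReal_add hB (mul_nonneg (sub_nonneg.2 h) (abs_nonneg a))]
          refine add_le_add hfB ?_
          simpa only [abs_neg] using lintegral_enorm_translate_sub_le hmono
            (riemannDatum_ge h) (riemannDatum_le h) (-a)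
  have hint := hfa.sub hmono.locallyIntegrable
  have hmass := (signedMass_le_integral_abs hint hR).trans
    (intervalIntegral_abs_le_of_lintegral_enorm_le
      (add_nonneg hB (mul_nonneg (sub_nonneg.2 h) (abs_nonneg a))) (by linarith)
      (intervalIntegrable_of_locallyIntegrable hint _ _) hdist)
  have hsub := signedMass_sub (R := R) hfa hmono.locallyIntegrable
  rw [signedMass_riemannDatum hR] at hsub
  linarith [hsub.trans_le hmass]

lemma sub_sq_le_sub_sq_add {a b c η : ℝ} (hcb : c ≤ b) (hab : a ≤ b) (hη : 0 ≤ η)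
    (ha : b - √η ≤ a) : (a - c) ^ 2 ≤ (b - c) ^ 2 + η := by
  rcases le_total c a with hca | hac
  · exact (pow_le_pow_left₀ (sub_nonneg.2 hca) (sub_le_sub_right hab c) 2).trans (by linarith)
  · have hsq : (c - a) ^ 2 ≤ η :=
      (pow_le_pow_left₀ (sub_nonneg.2 hac) (by linarith : c - a ≤ √η) 2).trans (Real.sq_sqrt hη).le
    nlinarith [sq_nonneg (b - c)]

namespace IsMonotoneFront

variable {ε : ℝ} {J : ℝ → ℝ} {um up : ℝ} {u : ℝ → ℝ → ℝ} (hu : IsMonotoneFront ε J um up u)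
include hu

lemma eventually_sq_sub_le_right {a b c η : ℝ} (ha : 0 < a) (hη : 0 < η) (hc : c ≤ up) :
    ∀ᶠ R in atTop, ∀ t ∈ Set.Icc a b, (u (R + c * t) t - c) ^ 2 ≤ (up - c) ^ 2 + η := by
  have hshift : Tendsto (fun R : ℝ => R - |c| * b) atTop atTop :=
    tendsto_atTop_add_const_right _ _ tendsto_id
  filter_upwards [hshift.eventually (hu.eventually_lt_atTop (b := b) ha (Real.sqrt_pos.2 hη))]
    with R hR t ht
  have ht₀ := ha.trans_le ht.1
  have hct : |c * t| ≤ |c| * b := by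
    rw [abs_mul, abs_of_pos ht₀]
    exact mul_le_mul_of_nonneg_left ht.2 (abs_nonneg c)
  refine sub_sq_le_sub_sq_add hc (hu.le _ ht₀) hη.le ((hR t ht).le.trans (hu.monotone t ht₀ ?_))
  linarith [(abs_le.1 hct).1]

lemma eventually_sq_sub_le_left {a b c η : ℝ} (ha : 0 < a) (hη : 0 < η) (hc : um ≤ c) :
    ∀ᶠ R in atTop, ∀ t ∈ Set.Icc a b, (u (-R + c * t) t - c) ^ 2 ≤ (c - um) ^ 2 + η := by
  have hshift : Tendsto (fun R : ℝ => -R + |c| * b) atTop atBot :=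
    tendsto_atBot_add_const_right _ _ tendsto_neg_atTop_atBot
  filter_upwards [hshift.eventually (hu.eventually_lt_atBot (b := b) ha (Real.sqrt_pos.2 hη))]
    with R hR t ht
  have ht₀ := ha.trans_le ht.1
  have hct : |c * t| ≤ |c| * b := by
    rw [abs_mul, abs_of_pos ht₀]
    exact mul_le_mul_of_nonneg_left ht.2 (abs_nonneg c)
  have hle : u (-R + c * t) t ≤ um + √η :=
    (hu.monotone t ht₀ (by linarith [(abs_le.1 hct).2])).trans (hR t ht).le
  have hsq := sub_sq_le_sub_sq_add (neg_le_neg hc) (neg_le_neg (hu.ge (-R + c * t) ht₀)) hη.le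
    (by linarith)
  linarith

lemma exists_rarefactionWave_crossing (h : um ≤ up) {T : ℝ} (hT : 0 < T) :
    ∃ c ∈ Set.Icc um up,
      (∀ y ≤ 0, rarefactionWave um up (y + c * T) T ≤ u (y + c * T) T) ∧
      ∀ y ≥ 0, u (y + c * T) T ≤ rarefactionWave um up (y + c * T) T := by
  have hcont : ContinuousOn (fun s => u (s * T) T - s) (Set.Icc um up) :=
    (((hu.continuous hT).comp (continuous_mul_const T)).sub continuous_id).continuousOn
  obtain ⟨c, hc, hzero⟩ := intermediate_value_Icc' h hcont
    (show (0 : ℝ) ∈ Set.Icc _ _ from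
      ⟨sub_nonpos.2 (hu.le (up * T) hT), sub_nonneg.2 (hu.ge (um * T) hT)⟩)
  have hcross : u (c * T) T = c := sub_eq_zero.1 hzero
  have hray : ∀ y, (y + c * T) / T = 1 / T * y + c := fun y => by field_simp
  have hslope := hu.monotone_one_div_mul_sub hT
  refine ⟨c, hc, fun y hy => ?_, fun y hy => ?_⟩ <;>
    rw [rarefactionWave_eq_max_min h _ hT, hray]
  · have hle := hslope (show y + c * T ≤ c * T by linarith)
    simp only [hcross, mul_add] at hle
    exact max_le (hu.ge _ hT) ((min_le_right _ _).trans (by linarith))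
  · have hle := hslope (show c * T ≤ y + c * T by linarith)
    simp only [hcross, mul_add] at hle
    exact le_max_of_le_right (le_min (hu.le _ hT) (by linarith))

lemma signedMass_sub_rarefactionWave_le (h : um ≤ up) {t₁ T B c R : ℝ} (ht₁ : 0 < t₁) (hT : t₁ ≤ T)
    (hB : 0 ≤ B) (huB : ∫⁻ x, ‖u x t₁ - riemannDatum um up x‖ₑ ≤ ENNReal.ofReal B)
    (hc : c ∈ Set.Icc um up) (hR : T * (up - um) ≤ R)
    (hleft : ∀ t ∈ Set.Icc t₁ T, (u (-R + c * t) t - c) ^ 2 ≤ (c - um) ^ 2 + 1 / T)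
    (hright : ∀ t ∈ Set.Icc t₁ T, (u (R + c * t) t - c) ^ 2 ≤ (up - c) ^ 2 + 1 / T) :
    signedMass (fun y => u (y + c * T) T) R
        - signedMass (fun y => rarefactionWave um up (y + c * T) T) R
      ≤ B + (up - um) * (max |um| |up| * t₁)
        + (2 * ε + secondMoment J) * Real.log (T / t₁) + 1 := by
  have hT₀ : 0 < T := ht₁.trans_le hT
  set D := ((c - um) ^ 2 + (up - c) ^ 2) / 2 + 1 / T with hD
  have hD₀ : 0 ≤ D := by positivity
  have hgrowth := hu.signedMass_sub_le (D := D) ht₁ hT (c := c) (R := R) fun t ht => by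
    linarith [hleft t ht, hright t ht]
  have hinitial := signedMass_translate_le h (hu.continuous ht₁) hB huB (c * t₁)
    ((mul_nonneg hT₀.le (sub_nonneg.2 h)).trans hR)
  have hrare := signedMass_rarefactionWave_ge h hc hT₀ hR
  have hshift : (up - um) * |c * t₁| ≤ (up - um) * (max |um| |up| * t₁) := by
    rw [abs_mul, abs_of_pos ht₁]
    exact mul_le_mul_of_nonneg_left
      (mul_le_mul_of_nonneg_right (abs_le_max_abs_abs hc.1 hc.2) ht₁.le) (sub_nonneg.2 h)
  have hDT : D * (T - t₁) ≤ T * ((c - um) ^ 2 + (up - c) ^ 2) / 2 + 1 :=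
    calc D * (T - t₁) ≤ D * T := mul_le_mul_of_nonneg_left (by linarith) hD₀
      _ = T * ((c - um) ^ 2 + (up - c) ^ 2) / 2 + 1 := by
        rw [hD]
        field_simp
  linarith

lemma lintegral_enorm_sub_rarefactionWave_le (h : um ≤ up) {t₁ T B : ℝ} (ht₁ : 0 < t₁)
    (hT : t₁ ≤ T) (hB : 0 ≤ B)
    (huB : ∫⁻ x, ‖u x t₁ - riemannDatum um up x‖ₑ ≤ ENNReal.ofReal B) :
    ∫⁻ x, ‖u x T - rarefactionWave um up x T‖ₑ ≤ ENNReal.ofReal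
      (B + (up - um) * (max |um| |up| * t₁)
        + (2 * ε + secondMoment J) * Real.log (T / t₁) + 1) := by
  have hT₀ : 0 < T := ht₁.trans_le hT
  obtain ⟨c, hc, hneg, hpos⟩ := hu.exists_rarefactionWave_crossing h hT₀
  have hloc : LocallyIntegrable fun y => u (y + c * T) T :=
    ((hu.continuous hT₀).comp (continuous_add_const _)).locallyIntegrable
  have hloc' : LocallyIntegrable fun y => rarefactionWave um up (y + c * T) T :=
    ((continuous_rarefactionWave h hT₀).comp (continuous_add_const _)).locallyIntegrable
  have hη : 0 < 1 / T := one_div_pos.2 hT₀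
  rw [← lintegral_add_right_eq_self _ (c * T)]
  refine lintegral_enorm_le_of_eventually_intervalIntegral_le (hloc.sub hloc') ?_
  filter_upwards [eventually_ge_atTop (T * (up - um)),
    hu.eventually_sq_sub_le_left (b := T) ht₁ hη hc.1,
    hu.eventually_sq_sub_le_right (b := T) ht₁ hη hc.2] with R hR hleft hright
  refine le_trans (le_of_eq ?_)
    (hu.signedMass_sub_rarefactionWave_le h ht₁ hT hB huB hc hR hleft hright)
  rw [signedMass_sub hloc hloc']
  exact integral_abs_eq_signedMass (hloc.sub hloc')
    ((mul_nonneg hT₀.le (sub_nonneg.2 h)).trans hR) (fun y hy => sub_nonneg.2 (hneg y hy))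
    fun y hy => sub_nonpos.2 (hpos y hy)

end IsMonotoneFront

end LongTime

section ViscosityBound

variable {um up B R : ℝ}

namespace IsMonotoneFront

variable {ε : ℝ} {J : ℝ → ℝ} {u : ℝ → ℝ → ℝ} (hu : IsMonotoneFront ε J um up u)
include hu

lemma abs_le (x : ℝ) {t : ℝ} (ht : 0 < t) : |u x t| ≤ max |um| |up| :=
  abs_le_max_abs_abs (hu.ge x ht) (hu.le x ht)

lemma exists_abs_totalFlux_le {t₀ : ℝ} (ht₀ : 0 < t₀) (c : ℝ) :
    ∃ K, ∀ x t, t₀ < t → |totalFlux ε J u c x t| ≤ K := by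
  obtain ⟨K, hK⟩ := hu.bounded
  refine ⟨(2 * ε + secondMoment J) / t₀ / 2 + (K + |c|) ^ 2 / 2, fun x t ht => ?_⟩
  have ht' := ht₀.trans ht
  have hupper := (hu.two_mul_totalFlux_le c x ht').trans (div_le_div_of_nonneg_left
    (add_nonneg (mul_nonneg zero_le_two hu.eps_pos.le) hu.kernel.secondMoment_nonneg) ht₀ ht.le)
  have hlower := hu.neg_totalFlux_le ht' c x
  have hsq : (u x t - c) ^ 2 ≤ (K + |c|) ^ 2 := by
    rw [← sq_abs]
    exact pow_le_pow_left₀ (abs_nonneg _) ((abs_sub _ _).trans (by gcongr; exact hK x t ht')) 2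
  have hA : 0 ≤ (2 * ε + secondMoment J) / t₀ := div_nonneg
    (add_nonneg (mul_nonneg zero_le_two hu.eps_pos.le) hu.kernel.secondMoment_nonneg) ht₀.le
  rw [_root_.abs_le]
  constructor <;> linarith [sq_nonneg (K + |c|)]

lemma hasDerivAt_integral_integral (R : ℝ) {t : ℝ} (ht : 0 < t) :
    HasDerivAt (fun s => ∫ y in -R..R, ∫ x in y..y + 2 * R, u x s)
      (∫ y in -R..R, (totalFlux ε J u 0 (y + 2 * R) t - totalFlux ε J u 0 y t)) t := by
  obtain ⟨K, hK⟩ := hu.exists_abs_totalFlux_le (half_pos ht) 0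
  have hmass : ∀ s > 0, Continuous fun y => ∫ x in y..y + 2 * R, u x s := fun s hs => by
    have hint : ∀ a b, IntervalIntegrable (fun x => u x s) volume a b := fun a b =>
      (hu.continuous hs).intervalIntegrable a b
    have hprim := intervalIntegral.continuous_primitive hint 0
    exact ((hprim.comp (continuous_add_const (2 * R))).sub hprim).congr fun y =>
      intervalIntegral.integral_interval_sub_left (hint _ _) (hint _ _)
  have hflux : Continuous fun y => totalFlux ε J u 0 y t :=
    continuous_iff_continuousAt.2 fun y => (hu.hasDerivAt_totalFlux ht 0 y).continuousAt
  refine (intervalIntegral.hasDerivAt_integral_of_dominated_loc_of_deriv_le (μ := volume)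
    (a := -R) (b := R) (x₀ := t) (F := fun s y => ∫ x in y..y + 2 * R, u x s)
    (F' := fun s y => totalFlux ε J u 0 (y + 2 * R) s - totalFlux ε J u 0 y s)
    (bound := fun _ => K + K) (Ioi_mem_nhds (half_lt_self ht))
    ((lt_mem_nhds ht).mono fun s hs => (hmass s hs).aestronglyMeasurable)
    ((hmass t ht).intervalIntegrable _ _)
    ((hflux.comp (continuous_add_const _)).sub hflux).aestronglyMeasurable
    (Eventually.of_forall fun y _ s hs =>
      (norm_sub_le _ _).trans (add_le_add (hK _ s hs) (hK _ s hs)))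
    intervalIntegrable_const
    (Eventually.of_forall fun y _ s hs => ?_)).2
  simpa only [zero_mul, add_zero] using
    hu.hasDerivAt_integral_ray ((half_pos ht).trans hs) 0 y (y + 2 * R)

lemma abs_integral_integral_le (hR : 0 ≤ R) {t : ℝ} (ht : 0 < t) :
    |∫ y in -R..R, ∫ x in y..y + 2 * R, u x t| ≤ 4 * R ^ 2 * max |um| |up| := by
  have hinner : ∀ y, ‖∫ x in y..y + 2 * R, u x t‖ ≤ max |um| |up| * (2 * R) := fun y => by
    refine (intervalIntegral.norm_integral_le_of_norm_le_const
      fun x _ => hu.abs_le x ht).trans_eq ?_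
    rw [add_sub_cancel_left, abs_of_nonneg (by linarith : 0 ≤ 2 * R)]
  refine (intervalIntegral.norm_integral_le_of_norm_le_const fun y _ => hinner y).trans_eq ?_
  rw [sub_neg_eq_add, abs_of_nonneg (by linarith : 0 ≤ R + R)]
  ring

lemma totalFlux_sub_totalFlux_le {t : ℝ} (ht : 1 / 4 ≤ t) (x y : ℝ) :
    totalFlux ε J u 0 x t - totalFlux ε J u 0 y t ≤ ε * (spaceDeriv u x t - spaceDeriv u y t)
      + (2 * secondMoment J + max |um| |up| ^ 2 / 2) := by
  have ht₀ : 0 < t := by linarith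
  obtain ⟨K, hK⟩ := hu.bounded
  have hx := hu.kernel.two_mul_nonlocalFlux_le (hu.continuous ht₀) (fun y => hK y t ht₀)
    (hu.monotone_one_div_mul_sub ht₀) x
  have hy := hu.kernel.nonlocalFlux_nonneg (hu.continuous ht₀) (fun y => hK y t ht₀)
    (hu.monotone t ht₀) y
  have ht₁ : 1 / t ≤ 4 := by
    rw [div_le_iff₀ ht₀]
    linarith
  have hm := mul_le_mul_of_nonneg_right ht₁ hu.kernel.secondMoment_nonneg
  have hsq : u y t ^ 2 ≤ max |um| |up| ^ 2 := by
    rw [← sq_abs]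
    exact pow_le_pow_left₀ (abs_nonneg _) (hu.abs_le y ht₀) 2
  unfold totalFlux
  simp only [sub_zero]
  linarith [sq_nonneg (u x t)]

lemma integral_totalFlux_sub_le {t : ℝ} (hB : 0 ≤ B) (hR : 0 < R) (hBR : 6 * B ≤ (up - um) * R)
    (ht : 1 / 4 ≤ t) (huB : ∫⁻ x, ‖u x t - riemannDatum um up x‖ₑ ≤ ENNReal.ofReal B) :
    ∫ y in -R..R, (totalFlux ε J u 0 (y + 2 * R) t - totalFlux ε J u 0 y t)
      ≤ 2 * R * (2 * secondMoment J + max |um| |up| ^ 2 / 2) - ε * ((up - um) / 2) := by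
  have ht₀ : 0 < t := by linarith
  have hflux : Continuous fun y => totalFlux ε J u 0 y t :=
    continuous_iff_continuousAt.2 fun y => (hu.hasDerivAt_totalFlux ht₀ 0 y).continuousAt
  have hux := hu.continuous_spaceDeriv ht₀
  have hux' : Continuous fun y => spaceDeriv u (y + 2 * R) t := hux.comp (continuous_add_const _)
  have hint : Continuous fun y => ε * (spaceDeriv u (y + 2 * R) t - spaceDeriv u y t) :=
    (hux'.sub hux).const_mul ε
  have hdiff : ∫ y in -R..R, (spaceDeriv u (y + 2 * R) t - spaceDeriv u y t)
      = (u (R + 2 * R) t - u (-R + 2 * R) t) - (u R t - u (-R) t) :=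
    intervalIntegral.integral_eq_sub_of_hasDerivAt
      (f := fun y => u (y + 2 * R) t - u y t) (fun y _ =>
        ((hu.hasDerivAt_space (y + 2 * R) ht₀).comp_add_const y (2 * R)).sub
          (hu.hasDerivAt_space y ht₀)) ((hux'.sub hux).intervalIntegrable _ _) |>.trans (by ring)
  have hconcave : (u (R + 2 * R) t - u (-R + 2 * R) t) - (u R t - u (-R) t) ≤ -((up - um) / 2) := by
    have htop := sub_mul_le_of_lintegral_enorm_sub_riemannDatum_le (hu.monotone t ht₀) hB huB hR.le
    have hbot := neg_sub_mul_le_of_lintegral_enorm_sub_riemannDatum_le (hu.monotone t ht₀) hB huB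
      hR.le
    rw [show -R + 2 * R = R by ring]
    refine le_of_mul_le_mul_right ?_ hR
    nlinarith [mul_le_mul_of_nonneg_right (hu.le (R + 2 * R) ht₀) hR.le]
  calc _ ≤ ∫ y in -R..R, (ε * (spaceDeriv u (y + 2 * R) t - spaceDeriv u y t)
          + (2 * secondMoment J + max |um| |up| ^ 2 / 2)) :=
        intervalIntegral.integral_mono_on (by linarith)
          (((hflux.comp (continuous_add_const _)).sub hflux).intervalIntegrable _ _)
          ((hint.intervalIntegrable _ _).add intervalIntegrable_const)
          fun y _ => hu.totalFlux_sub_totalFlux_le ht _ y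
    _ ≤ _ := by
        rw [intervalIntegral.integral_add (hint.intervalIntegrable _ _) intervalIntegrable_const,
          intervalIntegral.integral_const_mul, hdiff, intervalIntegral.integral_const, smul_eq_mul]
        linarith [mul_le_mul_of_nonneg_left hconcave hu.eps_pos.le]

lemma sub_mul_eps_le (hB : 0 ≤ B) (hR : 0 < R) (hBR : 6 * B ≤ (up - um) * R)
    (huB : ∀ t ∈ Set.Ioo (0 : ℝ) 1,
      ∫⁻ x, ‖u x t - riemannDatum um up x‖ₑ ≤ ENNReal.ofReal B) :
    (up - um) * ε ≤ 32 * R ^ 2 * max |um| |up|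
      + 4 * R * (2 * secondMoment J + max |um| |up| ^ 2 / 2) := by
  obtain ⟨s, hs, hslope⟩ := exists_hasDerivAt_eq_slope
    (fun t => ∫ y in -R..R, ∫ x in y..y + 2 * R, u x t)
    (fun t => ∫ y in -R..R, (totalFlux ε J u 0 (y + 2 * R) t - totalFlux ε J u 0 y t))
    (by norm_num : (1 / 4 : ℝ) < 3 / 4)
    (fun t ht => (hu.hasDerivAt_integral_integral R
      (by linarith [ht.1])).continuousAt.continuousWithinAt)
    fun t ht => hu.hasDerivAt_integral_integral R (by linarith [ht.1])
  have hderiv := hu.integral_totalFlux_sub_le hB hR hBR hs.1.le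
    (huB s ⟨by linarith [hs.1], by linarith [hs.2]⟩)
  rw [hslope, div_le_iff₀ (by norm_num)] at hderiv
  have hstart := (_root_.abs_le.1 (hu.abs_integral_integral_le hR.le (by norm_num : (0:ℝ) < 1/4))).2
  have hend := (_root_.abs_le.1 (hu.abs_integral_integral_le hR.le (by norm_num : (0:ℝ) < 3/4))).1
  linarith

end IsMonotoneFront

end ViscosityBound

section Duhamel

lemma lintegral_enorm_integral_le {α β : Type*} [MeasurableSpace α] [MeasurableSpace β]
    {μ : Measure α} {ν : Measure β} [SFinite μ] [SFinite ν] {f : α → β → ℝ}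
    (hf : AEStronglyMeasurable (Function.uncurry f) (μ.prod ν)) :
    ∫⁻ x, ‖∫ y, f x y ∂ν‖ₑ ∂μ ≤ ∫⁻ y, ∫⁻ x, ‖f x y‖ₑ ∂μ ∂ν :=
  (lintegral_mono fun _ => enorm_integral_le_lintegral_enorm _).trans_eq
    (lintegral_lintegral_swap hf.enorm)

lemma IsInteractionKernel.lintegral_enorm_integral_mul_sub_le {J f : ℝ → ℝ} {m M : ℝ}
    (hJ : IsInteractionKernel J) (hf : Monotone f) (hm : ∀ x, m ≤ f x) (hM : ∀ x, f x ≤ M) :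
    ∫⁻ x, ‖(∫ y, J y * f (x - y)) - f x‖ₑ ≤ ENNReal.ofReal ((M - m) * (1 + secondMoment J)) := by
  have hmM : 0 ≤ M - m := sub_nonneg.2 ((hm 0).trans (hM 0))
  have hfm := hf.measurable
  have hdiff : ∀ x, (∫ y, J y * f (x - y)) - f x = ∫ y, J y * (f (x - y) - f x) := fun x => by
    have hint : Integrable fun y => J y * f (x - y) :=
      hJ.integrable.mul_bdd (c := max |m| |M|)
        (hfm.comp (measurable_const.sub measurable_id)).aestronglyMeasurable
        (Eventually.of_forall fun y => abs_le_max_abs_abs (hm _) (hM _))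
    simp only [mul_sub]
    rw [integral_sub hint (hJ.integrable.mul_const _), integral_mul_const, hJ.integral_eq_one,
      one_mul]
  have hmeas : AEStronglyMeasurable (Function.uncurry fun x y => J y * (f (x - y) - f x))
      (volume.prod volume) :=
    hJ.integrable.1.comp_snd.mul (Measurable.aestronglyMeasurable (by fun_prop))
  have hint : Integrable fun y => (M - m) * (J y + y ^ 2 * J y) :=
    (hJ.integrable.add hJ.integrable_sq_mul).const_mul _
  have htranslate : ∀ y, ∫⁻ x, ‖J y * (f (x - y) - f x)‖ₑ
      ≤ ENNReal.ofReal ((M - m) * (J y + y ^ 2 * J y)) := fun y => by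
    simp only [enorm_mul]
    rw [lintegral_const_mul' _ _ enorm_ne_top, Real.enorm_eq_ofReal (hJ.nonneg y)]
    refine (mul_le_mul_right (lintegral_enorm_translate_sub_le hf hm hM y) _).trans ?_
    rw [← ENNReal.ofReal_mul (hJ.nonneg y)]
    refine ENNReal.ofReal_le_ofReal ?_
    have hy : |y| ≤ 1 + y ^ 2 := by nlinarith [sq_nonneg (|y| - 1), sq_abs y]
    linarith [mul_le_mul_of_nonneg_left hy (mul_nonneg hmM (hJ.nonneg y))]
  calc ∫⁻ x, ‖(∫ y, J y * f (x - y)) - f x‖ₑ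
      ≤ ∫⁻ y, ENNReal.ofReal ((M - m) * (J y + y ^ 2 * J y)) := by
        simp only [hdiff]
        exact (lintegral_enorm_integral_le hmeas).trans (lintegral_mono htranslate)
    _ = ENNReal.ofReal ((M - m) * (1 + secondMoment J)) := by
        rw [← ofReal_integral_eq_lintegral_ofReal hint (Eventually.of_forall fun y =>
          mul_nonneg hmM (add_nonneg (hJ.nonneg y) (mul_nonneg (sq_nonneg y) (hJ.nonneg y)))),
          integral_const_mul, integral_add hJ.integrable hJ.integrable_sq_mul, hJ.integral_eq_one,
          secondMoment]

variable {ε t : ℝ}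

lemma heatK_eq_gaussianPDFReal (hε : 0 < ε) (ht : 0 < t) :
    heatK ε t = ProbabilityTheory.gaussianPDFReal 0 (2 * ε * t).toNNReal := by
  ext y
  rw [heatK, ProbabilityTheory.gaussianPDFReal, Real.coe_toNNReal _ (by positivity), neg_div,
    Real.rpow_neg (by positivity), ← Real.sqrt_eq_rpow, sub_zero]
  ring_nf

lemma secondMoment_heatK (hε : 0 < ε) (ht : 0 < t) : secondMoment (heatK ε t) = 2 * ε * t := by
  have hv : 0 < 2 * ε * t := by positivity
  have hvar := ProbabilityTheory.variance_id_gaussianReal (μ := 0) (v := (2 * ε * t).toNNReal)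
  rw [ProbabilityTheory.variance_of_integral_eq_zero measurable_id.aemeasurable
      ProbabilityTheory.integral_id_gaussianReal,
    ProbabilityTheory.integral_gaussianReal_eq_integral_smul (Real.toNNReal_pos.2 hv).ne',
    Real.coe_toNNReal _ hv.le] at hvar
  rw [secondMoment, heatK_eq_gaussianPDFReal hε ht]
  simpa only [smul_eq_mul, mul_comm, id_eq] using hvar

lemma isInteractionKernel_heatK (hε : 0 < ε) (ht : 0 < t) : IsInteractionKernel (heatK ε t) where
  integrable := by
    rw [heatK_eq_gaussianPDFReal hε ht]
    exact ProbabilityTheory.integrable_gaussianPDFReal _ _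
  integrable_sq_mul := .of_integral_ne_zero <|
    (secondMoment_heatK hε ht).trans_ne (by positivity)
  integral_eq_one := by
    rw [heatK_eq_gaussianPDFReal hε ht]
    exact ProbabilityTheory.integral_gaussianPDFReal_eq_one _
      (Real.toNNReal_pos.2 (by positivity)).ne'
  even y := by rw [heatK, heatK, neg_sq]
  nonneg y := by
    rw [heatK_eq_gaussianPDFReal hε ht]
    exact ProbabilityTheory.gaussianPDFReal_nonneg _ _ _

/-- The Duhamel integral `∫₀ᵗ G^ε(·, t - s) * F(·, s) ds` of a source term `F`, as a function of the
space variable. -/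
noncomputable def duhamelIntegral (ε : ℝ) (F : ℝ → ℝ → ℝ) (t x : ℝ) : ℝ :=
  ∫ s in (0 : ℝ)..t, ∫ y, heatK ε (t - s) y * F (x - y) s

lemma measurable_heatK : Measurable fun q : ℝ × ℝ => heatK ε q.1 q.2 := by
  unfold heatK
  fun_prop

variable {F : ℝ → ℝ → ℝ}

lemma duhamelIntegral_congr {G : ℝ → ℝ → ℝ} (ht : 0 ≤ t) (h : ∀ x s, 0 < s → F x s = G x s) :
    duhamelIntegral ε F t = duhamelIntegral ε G t := by
  ext x
  unfold duhamelIntegral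
  rw [intervalIntegral.integral_of_le ht, intervalIntegral.integral_of_le ht]
  refine setIntegral_congr_fun measurableSet_Ioc fun s hs => ?_
  simp only [h _ s hs.1]

lemma exists_measurable_eq_of_continuousOn
    (hF : ContinuousOn (Function.uncurry F) {q : ℝ × ℝ | 0 < q.2}) :
    ∃ G : ℝ → ℝ → ℝ, Measurable (Function.uncurry G) ∧ ∀ x s, 0 < s → F x s = G x s := by
  classical
  refine ⟨Function.curry (Set.piecewise {q | 0 < q.2} (Function.uncurry F) 0), ?_,
    fun x s hs => (Set.piecewise_eq_of_mem {q : ℝ × ℝ | 0 < q.2} (Function.uncurry F) 0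
      (show (x, s) ∈ _ from hs)).symm⟩
  rw [Function.uncurry_curry]
  exact hF.measurable_piecewise continuousOn_const
    (measurableSet_lt measurable_const measurable_snd)

section Measurable

variable (hF : Measurable (Function.uncurry F))
include hF

lemma measurable_heatK_mul :
    Measurable fun q : (ℝ × ℝ) × ℝ => heatK ε (t - q.1.2) q.2 * F (q.1.1 - q.2) q.1.2 :=
  (measurable_heatK.comp (g := fun q : ℝ × ℝ => heatK ε q.1 q.2)
    (by fun_prop : Measurable fun q : (ℝ × ℝ) × ℝ => (t - q.1.2, q.2))).mul
  (hF.comp (by fun_prop : Measurable fun q : (ℝ × ℝ) × ℝ => (q.1.1 - q.2, q.1.2)))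

lemma stronglyMeasurable_integral_heatK_mul :
    StronglyMeasurable fun q : ℝ × ℝ => ∫ y, heatK ε (t - q.2) y * F (q.1 - y) q.2 :=
  (measurable_heatK_mul hF).stronglyMeasurable.integral_prod_right'

lemma measurable_duhamelIntegral (ht : 0 ≤ t) : Measurable (duhamelIntegral ε F t) := by
  unfold duhamelIntegral
  simp only [intervalIntegral.integral_of_le ht]
  exact (stronglyMeasurable_integral_heatK_mul hF).integral_prod_right'.measurable

lemma lintegral_enorm_duhamelIntegral_le (hε : 0 < ε) (ht : 0 ≤ t) {c : ℝ≥0∞}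
    (hc : ∀ s, 0 < s → ∫⁻ x, ‖F x s‖ₑ ≤ c) :
    ∫⁻ x, ‖duhamelIntegral ε F t x‖ₑ ≤ c * ENNReal.ofReal t := by
  have hslice : ∀ s ∈ Set.Ioo 0 t,
      ∫⁻ x, ‖∫ y, heatK ε (t - s) y * F (x - y) s‖ₑ ≤ c := fun s hs => by
    have hG := isInteractionKernel_heatK hε (sub_pos.2 hs.2)
    calc ∫⁻ x, ‖∫ y, heatK ε (t - s) y * F (x - y) s‖ₑ
        ≤ ∫⁻ y, ∫⁻ x, ‖heatK ε (t - s) y * F (x - y) s‖ₑ :=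
          lintegral_enorm_integral_le ((measurable_heatK_mul hF).comp (by fun_prop :
            Measurable fun q : ℝ × ℝ => ((q.1, s), q.2))).aestronglyMeasurable
      _ = ∫⁻ y, ‖heatK ε (t - s) y‖ₑ * ∫⁻ x, ‖F x s‖ₑ := by
          simp only [enorm_mul]
          refine lintegral_congr fun y => ?_
          rw [lintegral_const_mul' _ _ enorm_ne_top,
            lintegral_sub_right_eq_self (fun x => ‖F x s‖ₑ)]
      _ ≤ (∫⁻ y, ‖heatK ε (t - s) y‖ₑ) * c := by
          rw [← lintegral_mul_const'' _ hG.integrable.1.enorm]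
          exact lintegral_mono fun y => mul_le_mul_right (hc s hs.1) _
      _ = c := by
          rw [← ofReal_integral_norm_eq_lintegral_enorm hG.integrable]
          simp only [Real.norm_of_nonneg (hG.nonneg _), hG.integral_eq_one, ENNReal.ofReal_one,
            one_mul]
  simp only [duhamelIntegral, intervalIntegral.integral_of_le ht, integral_Ioc_eq_integral_Ioo]
  calc _ ≤ ∫⁻ s in Set.Ioo 0 t, ∫⁻ x, ‖∫ y, heatK ε (t - s) y * F (x - y) s‖ₑ :=
        lintegral_enorm_integral_le
          (stronglyMeasurable_integral_heatK_mul hF).aestronglyMeasurable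
    _ ≤ ∫⁻ _ in Set.Ioo 0 t, c := setLIntegral_mono' measurableSet_Ioo hslice
    _ = c * ENNReal.ofReal t := by rw [setLIntegral_const, Real.volume_Ioo, sub_zero]

end Measurable

end Duhamel

section InitialLayer

namespace IsMonotoneSolution

variable {ε : ℝ} {J : ℝ → ℝ} {u : ℝ → ℝ → ℝ} (hu : IsMonotoneSolution ε J u)
include hu

lemma continuousOn_uncurry : ContinuousOn (Function.uncurry u) {q : ℝ × ℝ | 0 < q.2} :=
  fun q hq => (hu.contDiffAt q.1 q.2 hq).continuousAt.continuousWithinAt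

lemma continuousOn_transport : ContinuousOn
    (Function.uncurry fun x s => u x s * deriv (fun z => u z s) x) {q : ℝ × ℝ | 0 < q.2} := by
  have hux : ContinuousOn (Function.uncurry (spaceDeriv u)) {q : ℝ × ℝ | 0 < q.2} :=
    fun q hq => (hu.contDiffAt_spaceDeriv q.1 hq).continuousAt.continuousWithinAt
  refine (hu.continuousOn_uncurry.mul hux).congr fun q hq => ?_
  exact congrArg (u q.1 q.2 * ·) (hu.hasDerivAt_space q.1 hq).deriv

-- The equation expresses the nonlocal term through derivatives of `u`, which are continuous.
lemma continuousOn_nonlocal : ContinuousOn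
    (Function.uncurry fun x s => (∫ z, J z * u (x - z) s) - u x s) {q : ℝ × ℝ | 0 < q.2} := by
  have hux : ContinuousOn (Function.uncurry (spaceDeriv u)) {q : ℝ × ℝ | 0 < q.2} :=
    fun q hq => (hu.contDiffAt_spaceDeriv q.1 hq).continuousAt.continuousWithinAt
  have huxx : ContinuousOn (Function.uncurry (spaceDeriv (spaceDeriv u))) {q : ℝ × ℝ | 0 < q.2} :=
    fun q hq => (hu.contDiffAt_spaceDeriv_spaceDeriv q.1 hq).continuousAt.continuousWithinAt
  have hut : ContinuousOn (Function.uncurry (timeDeriv u)) {q : ℝ × ℝ | 0 < q.2} :=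
    fun q hq => (hu.contDiffAt_timeDeriv q.1 hq).continuousAt.continuousWithinAt
  refine ((hut.sub (huxx.const_smul ε)).add (hu.continuousOn_uncurry.mul hux)).congr fun q hq => ?_
  have heq := hu.timeDeriv_eq q.1 hq
  simp only [Function.uncurry_def, Pi.sub_apply, Pi.add_apply, Pi.mul_apply, Pi.smul_apply,
    smul_eq_mul]
  linarith

lemma lintegral_enorm_transport_le {K t : ℝ} (hK : ∀ x, |u x t| ≤ K) (ht : 0 < t) :
    ∫⁻ x, ‖u x t * deriv (fun z => u z t) x‖ₑ ≤ ENNReal.ofReal (K * (2 * K)) := by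
  have hux := hu.continuous_spaceDeriv ht
  have hK₀ : 0 ≤ K := (abs_nonneg _).trans (hK 0)
  simp only [fun x => (hu.hasDerivAt_space x ht).deriv]
  refine lintegral_enorm_le_of_eventually_intervalIntegral_le
    ((hu.continuous ht).mul hux).locallyIntegrable ?_
  filter_upwards [eventually_ge_atTop 0] with R hR
  calc ∫ x in -R..R, |u x t * spaceDeriv u x t| ≤ ∫ x in -R..R, K * spaceDeriv u x t :=
        intervalIntegral.integral_mono_on (by linarith)
          (((hu.continuous ht).mul hux).abs.intervalIntegrable _ _)
          ((hux.const_mul K).intervalIntegrable _ _) fun x _ => by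
            rw [abs_mul, abs_of_nonneg (hu.spaceDeriv_nonneg x ht)]
            exact mul_le_mul_of_nonneg_right (hK x) (hu.spaceDeriv_nonneg x ht)
    _ = K * (u R t - u (-R) t) := by
        rw [intervalIntegral.integral_const_mul, intervalIntegral.integral_eq_sub_of_hasDerivAt
          (fun y _ => hu.hasDerivAt_space y ht) (hux.intervalIntegrable _ _)]
    _ ≤ K * (2 * K) := mul_le_mul_of_nonneg_left
        (by linarith [(abs_le.1 (hK R)).2, (abs_le.1 (hK (-R))).1]) hK₀

lemma lintegral_enorm_sub_initial_le {u₀ : ℝ → ℝ} (hD : IsDuhamelSol ε J u₀ u)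
    (hu₀ : Monotone u₀) {m M K t : ℝ} (hm : ∀ x, m ≤ u₀ x) (hM : ∀ x, u₀ x ≤ M)
    (hK : ∀ x t, 0 < t → |u x t| ≤ K) (ht : 0 < t) :
    ∫⁻ x, ‖u x t - u₀ x‖ₑ ≤ ENNReal.ofReal ((M - m) * (1 + 2 * ε * t))
      + ENNReal.ofReal ((K - -K) * (1 + secondMoment J)) * ENNReal.ofReal t
      + ENNReal.ofReal (K * (2 * K)) * ENNReal.ofReal t := by
  have hinitial := (isInteractionKernel_heatK hu.eps_pos ht).lintegral_enorm_integral_mul_sub_le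
    hu₀ hm hM
  rw [secondMoment_heatK hu.eps_pos ht] at hinitial
  obtain ⟨N, hN, hNeq⟩ := exists_measurable_eq_of_continuousOn hu.continuousOn_nonlocal
  obtain ⟨T, hT, hTeq⟩ := exists_measurable_eq_of_continuousOn hu.continuousOn_transport
  have hnonlocal := lintegral_enorm_duhamelIntegral_le hN hu.eps_pos ht.le fun s hs => by
    simp only [← hNeq _ s hs]
    exact hu.kernel.lintegral_enorm_integral_mul_sub_le (hu.monotone s hs)
      (fun x => (abs_le.1 (hK x s hs)).1) fun x => (abs_le.1 (hK x s hs)).2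
  have htransport := lintegral_enorm_duhamelIntegral_le hT hu.eps_pos ht.le fun s hs => by
    simp only [← hTeq _ s hs]
    exact hu.lintegral_enorm_transport_le (fun x => hK x s hs) hs
  have hsplit : ∀ x, u x t - u₀ x = ((∫ y, heatK ε t y * u₀ (x - y)) - u₀ x
      + duhamelIntegral ε N t x) - duhamelIntegral ε T t x := fun x => by
    rw [hD x t ht, ← duhamelIntegral_congr ht.le hNeq, ← duhamelIntegral_congr ht.le hTeq,
      duhamelIntegral, duhamelIntegral]
    ring
  calc ∫⁻ x, ‖u x t - u₀ x‖ₑ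
      ≤ ∫⁻ x, (‖(∫ y, heatK ε t y * u₀ (x - y)) - u₀ x‖ₑ + ‖duhamelIntegral ε N t x‖ₑ
          + ‖duhamelIntegral ε T t x‖ₑ) := lintegral_mono fun x => by
        rw [hsplit]
        exact enorm_sub_le.trans (add_le_add_left (enorm_add_le _ _) _)
    _ = (∫⁻ x, ‖(∫ y, heatK ε t y * u₀ (x - y)) - u₀ x‖ₑ)
          + (∫⁻ x, ‖duhamelIntegral ε N t x‖ₑ) + ∫⁻ x, ‖duhamelIntegral ε T t x‖ₑ := by
        rw [lintegral_add_right _ (measurable_duhamelIntegral hT ht.le).enorm,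
          lintegral_add_right _ (measurable_duhamelIntegral hN ht.le).enorm]
    _ ≤ _ := add_le_add (add_le_add hinitial hnonlocal) htransport

end IsMonotoneSolution

end InitialLayer

section Interpolation

lemma eLpNorm_le_eLpNorm_top_rpow_mul {α E : Type*} [MeasurableSpace α] [NormedAddCommGroup E]
    {μ : Measure α} {f : α → E} (hf : AEStronglyMeasurable f μ) {p : ℝ≥0∞} (hp : 1 ≤ p) :
    eLpNorm f p μ ≤ eLpNorm f ⊤ μ ^ (1 - p⁻¹.toReal) * eLpNorm f 1 μ ^ p⁻¹.toReal := by
  rcases eq_or_ne p ⊤ with rfl | hp_top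
  · simp
  have hp₀ : p ≠ 0 := (zero_lt_one.trans_le hp).ne'
  have hq : 1 ≤ p.toReal := (ENNReal.toReal_one ▸ ENNReal.toReal_mono hp_top hp)
  have hq₀ : 0 < p.toReal := zero_lt_one.trans_le hq
  have hpow : ∀ᵐ x ∂μ, ‖f x‖ₑ ^ p.toReal ≤ eLpNorm f ⊤ μ ^ (p.toReal - 1) * ‖f x‖ₑ := by
    rw [eLpNorm_exponent_top]
    filter_upwards [ae_le_eLpNormEssSup (f := f) (μ := μ)] with x hx
    calc ‖f x‖ₑ ^ p.toReal = ‖f x‖ₑ ^ (p.toReal - 1) * ‖f x‖ₑ := by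
          nth_rw 3 [← ENNReal.rpow_one ‖f x‖ₑ]
          rw [← ENNReal.rpow_add_of_nonneg _ _ (sub_nonneg.2 hq) zero_le_one, sub_add_cancel]
      _ ≤ _ := mul_le_mul_left (ENNReal.rpow_le_rpow hx (sub_nonneg.2 hq)) _
  calc eLpNorm f p μ = (∫⁻ x, ‖f x‖ₑ ^ p.toReal ∂μ) ^ p⁻¹.toReal := by
        rw [eLpNorm_eq_lintegral_rpow_enorm_toReal hp₀ hp_top, ENNReal.toReal_inv, one_div]
    _ ≤ (eLpNorm f ⊤ μ ^ (p.toReal - 1) * eLpNorm f 1 μ) ^ p⁻¹.toReal := by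
        rw [eLpNorm_one_eq_lintegral_enorm, ← lintegral_const_mul'' _ hf.enorm]
        exact ENNReal.rpow_le_rpow (lintegral_mono_ae hpow) ENNReal.toReal_nonneg
    _ = eLpNorm f ⊤ μ ^ (1 - p⁻¹.toReal) * eLpNorm f 1 μ ^ p⁻¹.toReal := by
        rw [ENNReal.mul_rpow_of_nonneg _ _ ENNReal.toReal_nonneg, ← ENNReal.rpow_mul,
          ENNReal.toReal_inv, sub_mul, mul_inv_cancel₀ hq₀.ne', one_mul]

lemma lipschitzWith_sub_of_monotone {f g : ℝ → ℝ} {k : ℝ} (hf : Monotone f) (hg : Monotone g)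
    (hkf : Monotone fun x => k * x - f x) (hkg : Monotone fun x => k * x - g x) :
    LipschitzWith k.toNNReal fun x => f x - g x := by
  refine LipschitzWith.of_le_add_mul' k fun x y => ?_
  rcases le_total x y with hxy | hxy
  · rw [dist_comm, Real.dist_eq, abs_of_nonneg (sub_nonneg.2 hxy)]
    linarith [hf hxy, hkg hxy]
  · rw [Real.dist_eq, abs_of_nonneg (sub_nonneg.2 hxy)]
    linarith [hg hxy, hkf hxy]

variable {f : ℝ → ℝ} {k L : ℝ} (hk : 0 < k) (hL : 0 ≤ L) (hf : LipschitzWith k.toNNReal f)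
  (hfL : ∫⁻ x, ‖f x‖ₑ ≤ ENNReal.ofReal L)
include hk hL hf hfL

-- `|f|` stays above `|f x| / 2` on an interval of length `|f x| / (2 k)`.
lemma sq_abs_le_of_lipschitzWith (x : ℝ) : |f x| ^ 2 ≤ 4 * k * L := by
  have hhalf : ∀ y ∈ Set.Ioo x (x + |f x| / (2 * k)), |f x| / 2 ≤ |f y| := fun y hy => by
    have hlip := hf.dist_le_mul x y
    rw [Real.coe_toNNReal _ hk.le, Real.dist_eq, dist_comm, Real.dist_eq,
      abs_of_pos (sub_pos.2 hy.1)] at hlip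
    have hlen := mul_le_mul_of_nonneg_left (sub_le_iff_le_add'.2 hy.2.le) hk.le
    rw [show k * (|f x| / (2 * k)) = |f x| / 2 by field_simp] at hlen
    linarith [abs_sub_abs_le_abs_sub (f x) (f y)]
  have hmass := mul_sub_le_of_lintegral_enorm_le (le_add_of_nonneg_right (by positivity)) hL hhalf
    hfL
  rw [add_sub_cancel_left, div_mul_div_comm, div_le_iff₀ (by positivity)] at hmass
  linarith

lemma eLpNorm_le_of_lipschitzWith {p : ℝ≥0∞} (hp : 1 ≤ p) :
    eLpNorm f p ≤ ENNReal.ofReal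
      ((4 * k * L) ^ ((1 - p⁻¹.toReal) / 2) * L ^ p⁻¹.toReal) := by
  have hθ : 0 ≤ 1 - p⁻¹.toReal := sub_nonneg.2 <|
    ENNReal.toReal_one ▸ ENNReal.toReal_mono ENNReal.one_ne_top (ENNReal.inv_le_one.2 hp)
  have htop : eLpNorm f ⊤ ≤ ENNReal.ofReal ((4 * k * L) ^ (1 / 2 : ℝ)) := by
    rw [eLpNorm_exponent_top, ← Real.sqrt_eq_rpow]
    exact eLpNormEssSup_le_of_ae_bound (Eventually.of_forall fun x =>
      Real.le_sqrt_of_sq_le (sq_abs_le_of_lipschitzWith hk hL hf hfL x))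
  have hconst : ENNReal.ofReal ((4 * k * L) ^ (1 / 2 : ℝ)) ^ (1 - p⁻¹.toReal)
      * ENNReal.ofReal L ^ p⁻¹.toReal
      = ENNReal.ofReal ((4 * k * L) ^ ((1 - p⁻¹.toReal) / 2) * L ^ p⁻¹.toReal) := by
    rw [ENNReal.ofReal_rpow_of_nonneg (by positivity) hθ,
      ENNReal.ofReal_rpow_of_nonneg hL ENNReal.toReal_nonneg,
      ← ENNReal.ofReal_mul (by positivity), ← Real.rpow_mul (by positivity), one_div_mul_eq_div]
  rw [← hconst]
  refine (eLpNorm_le_eLpNorm_top_rpow_mul hf.continuous.aestronglyMeasurable hp).trans ?_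
  rw [eLpNorm_one_eq_lintegral_enorm]
  exact mul_le_mul' (ENNReal.rpow_le_rpow htop hθ)
    (ENNReal.rpow_le_rpow hfL ENNReal.toReal_nonneg)

end Interpolation

section UniformBound

variable {J : ℝ → ℝ} {um up B : ℝ}

lemma exists_eps_le_of_lintegral_enorm_sub_riemannDatum_le (hum : um < up) (hB : 0 ≤ B) :
    ∃ E, ∀ ε u, IsMonotoneFront ε J um up u →
      (∀ t ∈ Set.Ioo (0 : ℝ) 1, ∫⁻ x, ‖u x t - riemannDatum um up x‖ₑ ≤ ENNReal.ofReal B) →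
      ε ≤ E := by
  have hd : 0 < up - um := sub_pos.2 hum
  set R := 6 * B / (up - um) + 1
  have hBR : 6 * B ≤ (up - um) * R := by
    rw [mul_add, mul_div_cancel₀ _ hd.ne', mul_one]
    linarith
  exact ⟨_, fun ε u hu huB => (le_div_iff₀' hd).2 (hu.sub_mul_eps_le hB (by positivity) hBR huB)⟩

lemma lintegral_enorm_sub_rarefactionWave_le_of_lt_one {f : ℝ → ℝ} {t : ℝ} (h : um ≤ up)
    (ht : t ∈ Set.Ioo (0 : ℝ) 1) (hB : 0 ≤ B)
    (hf : ∫⁻ x, ‖f x - riemannDatum um up x‖ₑ ≤ ENNReal.ofReal B) :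
    ∫⁻ x, ‖f x - rarefactionWave um up x t‖ₑ
      ≤ ENNReal.ofReal (B + 2 * ((up - um) * max |um| |up|)) := by
  have hdK : 0 ≤ (up - um) * max |um| |up| :=
    mul_nonneg (sub_nonneg.2 h) ((abs_nonneg _).trans (le_max_left _ _))
  have hmeas : Measurable fun x => riemannDatum um up x - rarefactionWave um up x t :=
    (monotone_riemannDatum h).measurable.sub (continuous_rarefactionWave h ht.1).measurable
  refine (lintegral_enorm_sub_le hmeas.aestronglyMeasurable).trans ((add_le_add hf
    (lintegral_enorm_riemannDatum_sub_rarefactionWave_le h ht.1)).trans ?_)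
  rw [← mul_assoc (up - um), ← ENNReal.ofReal_add hB
    (mul_nonneg zero_le_two (mul_nonneg hdK ht.1.le))]
  exact ENNReal.ofReal_le_ofReal (by linarith [mul_le_of_le_one_right hdK ht.2.le])

lemma exists_lintegral_enorm_sub_rarefactionWave_le_mul_log (hJ : IsInteractionKernel J)
    (hum : um < up) (hB : 0 ≤ B) :
    ∃ C > 0, ∀ ε u, IsMonotoneFront ε J um up u →
      (∀ t ∈ Set.Ioo (0 : ℝ) 1, ∫⁻ x, ‖u x t - riemannDatum um up x‖ₑ ≤ ENNReal.ofReal B) →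
      ∀ t > (0 : ℝ), ∫⁻ x, ‖u x t - rarefactionWave um up x t‖ₑ
        ≤ ENNReal.ofReal (C * Real.log (2 + t)) := by
  obtain ⟨E, hE⟩ := exists_eps_le_of_lintegral_enorm_sub_riemannDatum_le (J := J) hum hB
  have hm := hJ.secondMoment_nonneg
  have hdK : 0 ≤ (up - um) * max |um| |up| :=
    mul_nonneg (sub_pos.2 hum).le ((abs_nonneg _).trans (le_max_left _ _))
  set D := B + 2 * ((up - um) * max |um| |up|) + 1
  have : 0 < D := by positivity
  refine ⟨2 * D + 2 * (2 * |E| + secondMoment J), by positivity, fun ε u hu huB t ht => ?_⟩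
  have hlog : 1 / 2 ≤ Real.log (2 + t) := by
    linarith [Real.log_two_gt_d9, Real.log_le_log two_pos (by linarith : 2 ≤ 2 + t)]
  have hDlog : D ≤ 2 * D * Real.log (2 + t) := by nlinarith
  have hElog : 0 ≤ 2 * (2 * |E| + secondMoment J) * Real.log (2 + t) := by positivity
  rcases lt_or_ge t 1 with ht₁ | ht₁
  · refine (lintegral_enorm_sub_rarefactionWave_le_of_lt_one hum.le ⟨ht, ht₁⟩ hB
      (huB t ⟨ht, ht₁⟩)).trans (ENNReal.ofReal_le_ofReal ?_)
    linarith
  · refine (hu.lintegral_enorm_sub_rarefactionWave_le hum.le (t₁ := 1 / 2) (by norm_num)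
      (by linarith) hB (huB (1 / 2) (by norm_num))).trans (ENNReal.ofReal_le_ofReal ?_)
    have hlog₂ : Real.log (t / (1 / 2)) ≤ 2 * Real.log (2 + t) := by
      rw [← Real.log_rpow (by linarith)]
      refine Real.log_le_log (by positivity) ?_
      norm_num
      nlinarith
    have hdiffusion : (2 * ε + secondMoment J) * Real.log (t / (1 / 2))
        ≤ (2 * |E| + secondMoment J) * (2 * Real.log (2 + t)) :=
      mul_le_mul (by linarith [(hE ε u hu huB).trans (le_abs_self E)]) hlog₂
        (Real.log_nonneg (by linarith)) (by positivity)
    linarith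

end UniformBound

section Regularization

/-- The regularizations of the rarefaction problem with initial datum `u₀`: monotone solutions in
Duhamel form whose `L¹` distance to a reference function `w` is finite at all times and at most `M`
for times in `(0, 1)`. The bound `M` is shared by all viscosities `ε`. -/
structure IsRegularization (ε : ℝ) (J u₀ : ℝ → ℝ) (w : ℝ → ℝ → ℝ) (M : ℝ) (u : ℝ → ℝ → ℝ) : Prop
    extends IsMonotoneSolution ε J u where
  isDuhamelSol : IsDuhamelSol ε J u₀ u
  integrable_sub : ∀ t > (0 : ℝ), Integrable fun x => u x t - w x t
  integral_abs_sub_le : ∀ t ∈ Set.Ioo (0 : ℝ) 1, (∫ x, |u x t - w x t|) ≤ M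

variable {J u₀ : ℝ → ℝ} {um up : ℝ}

lemma lintegral_enorm_sub_riemannDatum_lt_top
    (hm : IntegrableOn (fun x => u₀ x - um) (Set.Iio 0))
    (hp : IntegrableOn (fun x => u₀ x - up) (Set.Ioi 0)) :
    ∫⁻ x, ‖u₀ x - riemannDatum um up x‖ₑ < ⊤ := by
  rw [← integrableOn_Ici_iff_integrableOn_Ioi] at hp
  have hneg : IntegrableOn (fun x => u₀ x - riemannDatum um up x) (Set.Iio 0) :=
    hm.congr_fun (fun x hx => by simp only [riemannDatum, if_pos (Set.mem_Iio.1 hx)])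
      measurableSet_Iio
  have hpos : IntegrableOn (fun x => u₀ x - riemannDatum um up x) (Set.Ici 0) :=
    hp.congr_fun (fun x hx => by simp only [riemannDatum, if_neg (Set.mem_Ici.1 hx).not_gt])
      measurableSet_Ici
  have hunion := hneg.union hpos
  rw [Set.Iio_union_Ici, integrableOn_univ] at hunion
  exact hunion.2

lemma monotone_of_eq_add_integral {v : ℝ → ℝ} (hv : Integrable v) (hv₀ : ∀ᵐ x, 0 ≤ v x)
    (hu₀v : ∀ x, u₀ x = u₀ 0 + ∫ s in (0 : ℝ)..x, v s) : Monotone u₀ := fun x y hxy => by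
  have hsub : (∫ s in (0 : ℝ)..y, v s) - ∫ s in (0 : ℝ)..x, v s = ∫ s in x..y, v s :=
    intervalIntegral.integral_interval_sub_left hv.intervalIntegrable hv.intervalIntegrable
  rw [hu₀v x, hu₀v y]
  linarith [intervalIntegral.integral_nonneg_of_ae (μ := volume) hxy hv₀]

variable {w : ℝ → ℝ → ℝ} {M : ℝ} (h : um ≤ up) (hu₀ : Monotone u₀)
  (h₀ : ∫⁻ x, ‖u₀ x - riemannDatum um up x‖ₑ < ⊤)

namespace IsRegularization

variable {ε : ℝ} {u : ℝ → ℝ → ℝ} (hu : IsRegularization ε J u₀ w M u)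
include hu

lemma lintegral_enorm_sub_le {t : ℝ} (ht : t ∈ Set.Ioo (0 : ℝ) 1) :
    ∫⁻ x, ‖u x t - w x t‖ₑ ≤ ENNReal.ofReal M := by
  rw [← ofReal_integral_norm_eq_lintegral_enorm (hu.integrable_sub t ht.1)]
  exact ENNReal.ofReal_le_ofReal (hu.integral_abs_sub_le t ht)

include h hu₀ h₀

lemma exists_lintegral_enorm_sub_riemannDatum_le (T : ℝ) :
    ∃ B, 0 ≤ B ∧ ∀ t ∈ Set.Ioc 0 T,
      ∫⁻ x, ‖u x t - riemannDatum um up x‖ₑ ≤ ENNReal.ofReal B := by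
  set B₀ := (∫⁻ x, ‖u₀ x - riemannDatum um up x‖ₑ).toReal
  have hB₀ : ∫⁻ x, ‖u₀ x - riemannDatum um up x‖ₑ ≤ ENNReal.ofReal B₀ :=
    (ENNReal.ofReal_toReal h₀.ne).ge
  obtain ⟨K, hK⟩ := hu.bounded
  have hmeas : Measurable fun x => u₀ x - riemannDatum um up x :=
    hu₀.measurable.sub (monotone_riemannDatum h).measurable
  refine ⟨(ENNReal.ofReal ((up - um) * (1 + 2 * ε * T))
      + ENNReal.ofReal ((K - -K) * (1 + secondMoment J)) * ENNReal.ofReal T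
      + ENNReal.ofReal (K * (2 * K)) * ENNReal.ofReal T + ENNReal.ofReal B₀).toReal,
    ENNReal.toReal_nonneg, fun t ht => ?_⟩
  rw [ENNReal.ofReal_toReal (by finiteness)]
  refine (_root_.lintegral_enorm_sub_le hmeas.aestronglyMeasurable).trans (add_le_add
    ((hu.lintegral_enorm_sub_initial_le hu.isDuhamelSol hu₀
      (ge_of_lintegral_enorm_sub_riemannDatum_le hu₀ ENNReal.toReal_nonneg hB₀)
      (le_of_lintegral_enorm_sub_riemannDatum_le hu₀ ENNReal.toReal_nonneg hB₀) hK ht.1).trans ?_)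
    hB₀)
  have hε := hu.eps_pos
  have : 0 ≤ up - um := sub_nonneg.2 h
  gcongr <;> exact ht.2

lemma isMonotoneFront : IsMonotoneFront ε J um up u where
  toIsMonotoneSolution := hu.toIsMonotoneSolution
  tendsto_atBot t ht := by
    obtain ⟨B, hB, huB⟩ := hu.exists_lintegral_enorm_sub_riemannDatum_le h hu₀ h₀ t
    exact tendsto_atBot_of_lintegral_enorm_sub_riemannDatum_le (hu.monotone t ht) hB
      (huB t ⟨ht, le_rfl⟩)
  tendsto_atTop t ht := by
    obtain ⟨B, hB, huB⟩ := hu.exists_lintegral_enorm_sub_riemannDatum_le h hu₀ h₀ t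
    exact tendsto_atTop_of_lintegral_enorm_sub_riemannDatum_le (hu.monotone t ht) hB
      (huB t ⟨ht, le_rfl⟩)

end IsRegularization

include h hu₀ h₀ in
-- The Duhamel bound grows with `ε`, so it is used for a single regularization `u₁`; every other one
-- is within `2 M` of `u₁` in `L¹` because both are within `M` of `w`.
lemma exists_lintegral_enorm_sub_riemannDatum_le_of_isRegularization :
    ∃ B, 0 ≤ B ∧ ∀ ε u, IsRegularization ε J u₀ w M u → ∀ t ∈ Set.Ioo (0 : ℝ) 1,
      ∫⁻ x, ‖u x t - riemannDatum um up x‖ₑ ≤ ENNReal.ofReal B := by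
  by_cases hex : ∃ ε u, IsRegularization ε J u₀ w M u
  · obtain ⟨ε₁, u₁, hu₁⟩ := hex
    obtain ⟨B₁, -, hB₁⟩ := hu₁.exists_lintegral_enorm_sub_riemannDatum_le h hu₀ h₀ 1
    refine ⟨(ENNReal.ofReal M + (ENNReal.ofReal M + ENNReal.ofReal B₁)).toReal,
      ENNReal.toReal_nonneg, fun ε u hu t ht => ?_⟩
    have hriemann : Measurable fun x => u₁ x t - riemannDatum um up x :=
      (hu₁.monotone t ht.1).measurable.sub (monotone_riemannDatum h).measurable
    have hreference : AEStronglyMeasurable fun x => w x t - riemannDatum um up x :=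
      (hriemann.aestronglyMeasurable.sub (hu₁.integrable_sub t ht.1).1).congr
        (Eventually.of_forall fun x => by simp)
    have hw : ∫⁻ x, ‖w x t - u₁ x t‖ₑ ≤ ENNReal.ofReal M := by
      simpa only [enorm_sub_rev] using hu₁.lintegral_enorm_sub_le ht
    rw [ENNReal.ofReal_toReal (by finiteness)]
    exact (lintegral_enorm_sub_le hreference).trans (add_le_add (hu.lintegral_enorm_sub_le ht)
      ((lintegral_enorm_sub_le hriemann.aestronglyMeasurable).trans
        (add_le_add hw (hB₁ t ⟨ht.1, ht.2.le⟩))))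
  · exact ⟨0, le_rfl, fun ε u hu => absurd ⟨ε, u, hu⟩ hex⟩

end Regularization

theorem stmt14_general {J : ℝ → ℝ} (hJ : IsInteractionKernel J) {um up : ℝ} (hum : um < up)
    {u₀ : ℝ → ℝ} (hu₀ : Monotone u₀)
    (hm : IntegrableOn (fun x => u₀ x - um) (Set.Iio 0))
    (hp : IntegrableOn (fun x => u₀ x - up) (Set.Ioi 0))
    (w : ℝ → ℝ → ℝ) (M : ℝ) {p : ℝ≥0∞} (hp₁ : 1 ≤ p) :
    ∃ C > (0 : ℝ), ∀ ε u, IsRegularization ε J u₀ w M u → ∀ t > (0 : ℝ),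
      eLpNorm (fun x => u x t - rarefactionWave um up x t) p volume
        ≤ ENNReal.ofReal (C * t ^ (-(1 - p⁻¹.toReal) / 2) *
            Real.log (2 + t) ^ ((1 + p⁻¹.toReal) / 2)) := by
  have h₀ := lintegral_enorm_sub_riemannDatum_lt_top hm hp
  obtain ⟨B, hB, hriemann⟩ := exists_lintegral_enorm_sub_riemannDatum_le_of_isRegularization
    (J := J) (w := w) (M := M) hum.le hu₀ h₀
  obtain ⟨L, hL, hrarefaction⟩ := exists_lintegral_enorm_sub_rarefactionWave_le_mul_log hJ hum hB
  refine ⟨(4 * L) ^ ((1 - p⁻¹.toReal) / 2) * L ^ p⁻¹.toReal, by positivity, fun ε u hu t ht => ?_⟩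
  have hfront := hu.isMonotoneFront hum.le hu₀ h₀
  have hlog : 0 < Real.log (2 + t) := Real.log_pos (by linarith)
  have hlip := lipschitzWith_sub_of_monotone (hfront.monotone t ht)
    (monotone_rarefactionWave hum.le ht) (hfront.monotone_one_div_mul_sub ht)
    (monotone_one_div_mul_sub_rarefactionWave hum.le ht)
  refine (eLpNorm_le_of_lipschitzWith (one_div_pos.2 ht) (by positivity) hlip
    (hrarefaction ε u hfront (hriemann ε u hu) t ht) hp₁).trans_eq (congrArg _ ?_)
  rw [show 4 * (1 / t) * (L * Real.log (2 + t)) = 4 * L * t⁻¹ * Real.log (2 + t) by ring,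
    Real.mul_rpow (by positivity) hlog.le, Real.mul_rpow (by positivity) (by positivity),
    Real.mul_rpow hL.le hlog.le, Real.inv_rpow ht.le, ← Real.rpow_neg ht.le, neg_div,
    show (1 + p⁻¹.toReal) / 2 = (1 - p⁻¹.toReal) / 2 + p⁻¹.toReal by ring, Real.rpow_add hlog]
  ring

/-- Convergence of the regularized solutions towards the rarefaction wave:
for every `p ∈ [1,∞]` there is `C = C(p) > 0`, independent of `t` and of `ε`, such that
`‖u^ε(·,t) - w^R(·,t)‖_p ≤ C t^{-(1-1/p)/2} [log(2+t)]^{(1+1/p)/2}` for all `t > 0`. -/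
theorem stmt14 (J : ℝ → ℝ) (hJint : Integrable J) (hJ2 : Integrable fun x => x ^ 2 * J x)
    (hJ1 : (∫ x, J x) = 1) (hJeven : ∀ x, J (-x) = J x) (hJpos : ∀ x, 0 ≤ J x)
    (um up : ℝ) (hum : um < up)
    (u₀ : ℝ → ℝ) (hu₀b : ∃ M, ∀ x, |u₀ x| ≤ M)
    (hm : IntegrableOn (fun x => u₀ x - um) (Set.Iio 0))
    (hp : IntegrableOn (fun x => u₀ x - up) (Set.Ioi 0))
    (v : ℝ → ℝ) (hv : Integrable v) (hv0 : ∀ᵐ x ∂(volume : Measure ℝ), 0 ≤ v x)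
    (hu₀v : ∀ x, u₀ x = u₀ 0 + ∫ s in (0 : ℝ)..x, v s)
    (w : ℝ → ℝ → ℝ) (hw : IsBurgersRiemannSol um up w)
    (M : ℝ) :
    ∀ p : ℝ≥0∞, 1 ≤ p → ∃ C > (0 : ℝ), ∀ ε > (0 : ℝ), ∀ u : ℝ → ℝ → ℝ,
      (∃ K, ∀ x t, 0 < t → |u x t| ≤ K) →
      (∀ x t, 0 < t → ContDiffAt ℝ (⊤ : ℕ∞) (Function.uncurry u) (x, t)) →
      (∀ t₀ > (0 : ℝ), ∀ n : ℕ, ∃ K, ∀ x t, t₀ < t →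
        ‖iteratedFDeriv ℝ n (Function.uncurry u) (x, t)‖ ≤ K) →
      (∀ x t, 0 < t →
        HasDerivAt (fun s => u x s)
          (ε * iteratedDeriv 2 (fun y => u y t) x + ((∫ z, J z * u (x - z) t) - u x t)
            - u x t * deriv (fun y => u y t) x) t) →
      (∀ t > (0 : ℝ), Monotone fun x => u x t) →
      IsDuhamelSol ε J u₀ u →
      (∀ t > (0 : ℝ), Integrable fun x => u x t - w x t) →
      (∀ t ∈ Set.Ioo (0 : ℝ) 1, (∫ x, |u x t - w x t|) ≤ M) →
      ∀ t > (0 : ℝ),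
        eLpNorm (fun x => u x t - rarefactionWave um up x t) p volume
          ≤ ENNReal.ofReal
              (C * t ^ (-(1 - p⁻¹.toReal) / 2) *
                Real.log (2 + t) ^ ((1 + p⁻¹.toReal) / 2)) := by
  intro p hp₁
  obtain ⟨C, hC, h⟩ := stmt14_general ⟨hJint, hJ2, hJ1, hJeven, hJpos⟩ hum
    (monotone_of_eq_add_integral hv hv0 hu₀v) hm hp w M hp₁
  exact ⟨C, hC, fun ε hε u hub hus hud hueq humono huD huw huM =>
    h ε u ⟨⟨hε, ⟨hJint, hJ2, hJ1, hJeven, hJpos⟩, hub, hus, hud, hueq, humono⟩, huD, huw, huM⟩⟩
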